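/- arXiv:0805.4823 — 2 statements merged into one kernel-verified Lean document; each statement's English description precedes it below -/
import Mathlib

section
/- (Proposition 1.5: L^p decay and upper bound on the extinction time for the Dirichlet problem.) Let d ≥ 3, m < 1 with m ≠ 0, α ≥ 1, R > 0, and let p > max{p_c, 1} where p_c = d(1−m)/2. There exists a positive constant κ depending only on m, p and d such that the following holds. Let u solve the homogeneous Dirichlet problem for the FDE ∂ₜu = Δ(u^m)/m on B_{αR}(x₀) with nonnegative initial data u₀ ∈ L^p(B_{αR}(x₀)) supported in the closure of B_R(x₀), and extinction time T. Then, setting K_p = κ (αR)^{−2(1 − p_c/p)}, for every 0 ≤ s ≤ t ≤ T: ‖u(t,·)‖_{L^p(B_{αR}(x₀))}^{1−m} − ‖u(s,·)‖_{L^p(B_{αR}(x₀))}^{1−m} ≤ −K_p (t − s). In particular, T ≤ K_p^{−1} ‖u₀‖_{L^p(B_{αR}(x₀))}^{1−m}. -/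
open MeasureTheory Metric Set Real

/-- The spatial Laplacian of `f : ℝ^d → ℝ` at a point, as the sum of second
coordinate derivatives. -/
noncomputable def spaceLap {d : ℕ} (f : EuclideanSpace ℝ (Fin d) → ℝ)
    (x : EuclideanSpace ℝ (Fin d)) : ℝ :=
  ∑ i : Fin d, fderiv ℝ (fun y => fderiv ℝ f y (EuclideanSpace.single i 1)) x
    (EuclideanSpace.single i 1)

/-- `u` is a classical solution of the fast diffusion equation `∂ₜ u = Δ(u^m)/m`
on the space-time set `Q`: it is positive and smooth on `Q` and satisfies the
equation pointwise on `Q`. -/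
def IsFDESolM {d : ℕ} (m : ℝ) (Q : Set (ℝ × EuclideanSpace ℝ (Fin d)))
    (u : ℝ → EuclideanSpace ℝ (Fin d) → ℝ) : Prop :=
  (∀ p ∈ Q, 0 < u p.1 p.2) ∧
  ContDiffOn ℝ (⊤ : ℕ∞) (fun p : ℝ × EuclideanSpace ℝ (Fin d) => u p.1 p.2) Q ∧
  ∀ p ∈ Q, deriv (fun s => u s p.2) p.1 = spaceLap (fun y => u p.1 y ^ m) p.2 / m

/-- `u` solves the homogeneous Dirichlet problem for the FDE `∂ₜ u = Δ(u^m)/m` on the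
ball `B_ρ(x₀)` with initial data `u₀` and extinction time `T`. -/
def IsDirichletSolM {d : ℕ} (m : ℝ) (x₀ : EuclideanSpace ℝ (Fin d)) (ρ T : ℝ)
    (u : ℝ → EuclideanSpace ℝ (Fin d) → ℝ) (u₀ : EuclideanSpace ℝ (Fin d) → ℝ) : Prop :=
  (∀ t ∈ Icc 0 T, ∀ x ∈ closedBall x₀ ρ, 0 ≤ u t x) ∧
  ContinuousOn (fun p : ℝ × EuclideanSpace ℝ (Fin d) => u p.1 p.2)
    (Icc 0 T ×ˢ closedBall x₀ ρ) ∧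
  IsFDESolM m (Ioo 0 T ×ˢ ball x₀ ρ) u ∧
  (∀ x ∈ ball x₀ ρ, u 0 x = u₀ x) ∧
  (∀ t ∈ Ioc 0 T, ∀ x ∈ sphere x₀ ρ, u t x = 0) ∧
  (∀ x ∈ closedBall x₀ ρ, u T x = 0) ∧
  ∀ t ∈ Ioo 0 T, ∃ x ∈ ball x₀ ρ, u t x ≠ 0

/-!
Multiplying the equation by `p uᵖ⁻¹` and integrating by parts formally gives
`d/dt ∫ uᵖ = -c ∫ |∇uᵃ|²` with `2a = p + m - 1`. For `p ≥ p_c` the Sobolev inequality on a ball of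
radius `ρ` bounds the right-hand side by `-k ρ^(-2(1 - p_c/p)) (∫ uᵖ)^(2a/p)`, and integrating this
differential inequality for `Y = ∫ uᵖ`, whose exponent is `2a/p = 1 - (1-m)/p < 1`, makes
`Y^((1-m)/p)` decay linearly.

Since `u` need not be differentiable up to the boundary, powers of `u` are replaced by truncated
powers that vanish for `u ≤ ε`: their compositions with `u` have compact support, so the
integrations by parts are exact, and the truncation error tends to zero uniformly with `ε`.
-/

open scoped Topology

/-! ### Truncated powers -/

/-- A continuous cutoff at level `ε`: it takes values in `[0, 1]`, vanishes on `(-∞, ε]` and equals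
`1` on `[2ε, ∞)`. It is used to cut powers of a solution off near the boundary. -/
structure IsCutoff (ε : ℝ) (η : ℝ → ℝ) : Prop where
  pos : 0 < ε
  continuous : Continuous η
  nonneg : ∀ s, 0 ≤ η s
  le_one : ∀ s, η s ≤ 1
  eq_zero : ∀ s ≤ ε, η s = 0
  eq_one : ∀ s, 2 * ε ≤ s → η s = 1

theorem exists_isCutoff {ε : ℝ} (hε : 0 < ε) : ∃ η, IsCutoff ε η :=
  ⟨fun s => smoothTransition (s / ε - 1),
    { pos := hε
      continuous := by fun_prop
      nonneg := fun _ => smoothTransition.nonneg _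
      le_one := fun _ => smoothTransition.le_one _
      eq_zero := fun s hs => smoothTransition.zero_of_nonpos <| by
        rwa [sub_nonpos, div_le_one₀ hε]
      eq_one := fun s hs => smoothTransition.one_of_one_le <| by
        rw [le_sub_iff_add_le, le_div_iff₀ hε]
        linarith }⟩

/-- The truncated power `u ↦ ∫₀ᵘ a sᵃ⁻¹ η(s) ds`, which is `uᵃ` for `η = 1` and `a > 0`. -/
noncomputable def truncRpow (η : ℝ → ℝ) (a u : ℝ) : ℝ :=
  ∫ s in (0 : ℝ)..u, a * (s ^ (a - 1) * η s)

/-- The truncated entropy `Φ` approximating `uᵖ`: it vanishes to second order at `0` and satisfies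
`Φ''(s) = p (p - 1) sᵖ⁻² η(s)²`. The square of `η` matches the square of the derivative of
`truncRpow η`. -/
noncomputable def truncEntropy (η : ℝ → ℝ) (p u : ℝ) : ℝ :=
  p * ∫ s in (0 : ℝ)..u, truncRpow (η ^ 2) (p - 1) s

theorem integral_mul_rpow_sub_one {a : ℝ} (ha : 0 < a) (u v : ℝ) :
    ∫ s in u..v, a * s ^ (a - 1) = v ^ a - u ^ a := by
  rw [intervalIntegral.integral_const_mul, integral_rpow (Or.inl (by linarith)), sub_add_cancel,
    mul_div_cancel₀ _ ha.ne']

namespace IsCutoff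

variable {ε a p u : ℝ} {η : ℝ → ℝ}

theorem sq (h : IsCutoff ε η) : IsCutoff ε (η ^ 2) where
  pos := h.pos
  continuous := h.continuous.pow 2
  nonneg s := sq_nonneg (η s)
  le_one s := pow_le_one₀ (h.nonneg s) (h.le_one s)
  eq_zero s hs := by simp [h.eq_zero s hs]
  eq_one s hs := by simp [h.eq_one s hs]

theorem continuous_truncRpow_integrand (h : IsCutoff ε η) (a : ℝ) :
    Continuous fun s => a * (s ^ (a - 1) * η s) := by
  refine continuous_iff_continuousAt.2 fun s => ?_
  rcases lt_or_ge s ε with hs | hs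
  · refine continuousAt_const (y := (0 : ℝ)) |>.congr ?_
    filter_upwards [Iio_mem_nhds hs] with t ht
    rw [h.eq_zero t (le_of_lt ht), mul_zero, mul_zero]
  · have hpow := continuousAt_rpow_const s (a - 1) (Or.inl (h.pos.trans_le hs).ne')
    exact continuousAt_const.mul (hpow.mul h.continuous.continuousAt)

theorem hasDerivAt_truncRpow (h : IsCutoff ε η) (a u : ℝ) :
    HasDerivAt (truncRpow η a) (a * (u ^ (a - 1) * η u)) u :=
  ((h.continuous_truncRpow_integrand a).integral_hasStrictDerivAt 0 u).hasDerivAt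

theorem contDiff_truncRpow (h : IsCutoff ε η) (a : ℝ) : ContDiff ℝ 1 (truncRpow η a) := by
  refine contDiff_one_iff_deriv.2
    ⟨fun u => (h.hasDerivAt_truncRpow a u).differentiableAt, ?_⟩
  rw [funext fun u => (h.hasDerivAt_truncRpow a u).deriv]
  exact h.continuous_truncRpow_integrand a

theorem truncRpow_eq_zero (h : IsCutoff ε η) (hu : u ≤ ε) : truncRpow η a u = 0 := by
  refine (intervalIntegral.integral_congr fun s hs => ?_).trans intervalIntegral.integral_zero
  have hsε : s ≤ ε := hs.2.trans (max_le h.pos.le hu)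
  simp only [h.eq_zero s hsε, mul_zero]

theorem truncRpow_sub_truncRpow (h : IsCutoff ε η) (a u v : ℝ) :
    truncRpow η a v - truncRpow η a u = ∫ s in u..v, a * (s ^ (a - 1) * η s) :=
  intervalIntegral.integral_interval_sub_left
    ((h.continuous_truncRpow_integrand a).intervalIntegrable 0 v)
    ((h.continuous_truncRpow_integrand a).intervalIntegrable 0 u)

theorem truncRpow_mono (h : IsCutoff ε η) (ha : 0 ≤ a) {v : ℝ} (hu : 0 ≤ u) (huv : u ≤ v) :
    truncRpow η a u ≤ truncRpow η a v := by
  rw [← sub_nonneg, h.truncRpow_sub_truncRpow]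
  exact intervalIntegral.integral_nonneg huv fun s hs =>
    mul_nonneg ha (mul_nonneg (rpow_nonneg (hu.trans hs.1) _) (h.nonneg s))

theorem truncRpow_nonneg (h : IsCutoff ε η) (ha : 0 ≤ a) (hu : 0 ≤ u) : 0 ≤ truncRpow η a u :=
  (h.truncRpow_eq_zero h.pos.le).symm.trans_le (h.truncRpow_mono ha le_rfl hu)

theorem truncRpow_le_rpow (h : IsCutoff ε η) (ha : 0 < a) (hu : 0 ≤ u) :
    truncRpow η a u ≤ u ^ a := by
  have hint := h.continuous_truncRpow_integrand a
  calc truncRpow η a u ≤ ∫ s in (0 : ℝ)..u, a * s ^ (a - 1) := by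
        refine intervalIntegral.integral_mono_on hu (hint.intervalIntegrable _ _)
          ((intervalIntegral.intervalIntegrable_rpow' (by linarith)).const_mul a) fun s hs => ?_
        exact mul_le_mul_of_nonneg_left
          (mul_le_of_le_one_right (rpow_nonneg hs.1 _) (h.le_one s)) ha.le
    _ = u ^ a := by rw [integral_mul_rpow_sub_one ha, zero_rpow ha.ne', sub_zero]

theorem rpow_le_truncRpow_add (h : IsCutoff ε η) (ha : 0 < a) (hu : 0 ≤ u) :
    u ^ a ≤ truncRpow η a u + (2 * ε) ^ a := by
  rcases le_total u (2 * ε) with hle | hge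
  · linarith [h.truncRpow_nonneg ha.le hu, rpow_le_rpow hu hle ha.le]
  · have hdiff : truncRpow η a u - truncRpow η a (2 * ε) = u ^ a - (2 * ε) ^ a := by
      rw [h.truncRpow_sub_truncRpow, ← integral_mul_rpow_sub_one ha]
      refine intervalIntegral.integral_congr fun s hs => ?_
      rw [uIcc_of_le hge] at hs
      simp only [h.eq_one s hs.1, mul_one]
    linarith [h.truncRpow_nonneg ha.le (u := 2 * ε) (by linarith [h.pos])]

theorem hasDerivAt_truncEntropy (h : IsCutoff ε η) (p u : ℝ) :
    HasDerivAt (truncEntropy η p) (p * truncRpow (η ^ 2) (p - 1) u) u :=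
  (h.sq.contDiff_truncRpow (p - 1)).continuous.integral_hasStrictDerivAt 0 u
    |>.hasDerivAt.const_mul p

theorem contDiff_truncEntropy (h : IsCutoff ε η) (p : ℝ) : ContDiff ℝ 1 (truncEntropy η p) := by
  refine contDiff_one_iff_deriv.2
    ⟨fun u => (h.hasDerivAt_truncEntropy p u).differentiableAt, ?_⟩
  rw [funext fun u => (h.hasDerivAt_truncEntropy p u).deriv]
  exact continuous_const.mul (h.sq.contDiff_truncRpow (p - 1)).continuous

theorem truncEntropy_le_rpow (h : IsCutoff ε η) (hp : 1 < p) (hu : 0 ≤ u) :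
    truncEntropy η p u ≤ u ^ p := by
  have hp0 : 0 < p := by linarith
  calc truncEntropy η p u ≤ p * ∫ s in (0 : ℝ)..u, s ^ (p - 1) := by
        refine mul_le_mul_of_nonneg_left (intervalIntegral.integral_mono_on hu
          ((h.sq.contDiff_truncRpow (p - 1)).continuous.intervalIntegrable _ _)
          (intervalIntegral.intervalIntegrable_rpow' (by linarith)) fun s hs => ?_) hp0.le
        exact h.sq.truncRpow_le_rpow (by linarith) hs.1
    _ = u ^ p := by
        rw [← intervalIntegral.integral_const_mul, integral_mul_rpow_sub_one hp0,
          zero_rpow hp0.ne', sub_zero]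

theorem rpow_le_truncEntropy_add (h : IsCutoff ε η) (hp : 1 < p) (hu : 0 ≤ u) :
    u ^ p ≤ truncEntropy η p u + p * (u * (2 * ε) ^ (p - 1)) := by
  have hp0 : 0 < p := by linarith
  have hint := (h.sq.contDiff_truncRpow (p - 1)).continuous.intervalIntegrable (μ := volume) 0 u
  calc u ^ p = p * ∫ s in (0 : ℝ)..u, s ^ (p - 1) := by
        rw [← intervalIntegral.integral_const_mul, integral_mul_rpow_sub_one hp0,
          zero_rpow hp0.ne', sub_zero]
    _ ≤ p * ∫ s in (0 : ℝ)..u, (truncRpow (η ^ 2) (p - 1) s + (2 * ε) ^ (p - 1)) := by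
        refine mul_le_mul_of_nonneg_left (intervalIntegral.integral_mono_on hu
          (intervalIntegral.intervalIntegrable_rpow' (by linarith))
          (hint.add intervalIntegrable_const) fun s hs => ?_) hp0.le
        exact h.sq.rpow_le_truncRpow_add (by linarith) hs.1
    _ = truncEntropy η p u + p * (u * (2 * ε) ^ (p - 1)) := by
        rw [intervalIntegral.integral_add hint intervalIntegrable_const,
          intervalIntegral.integral_const, sub_zero, smul_eq_mul, mul_add, truncEntropy]

end IsCutoff

theorem tendsto_two_mul_rpow_nhdsGT_zero {b : ℝ} (hb : 0 < b) :
    Filter.Tendsto (fun ε : ℝ => (2 * ε) ^ b) (𝓝[>] 0) (𝓝 0) := by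
  have hcont : Continuous fun ε : ℝ => (2 * ε) ^ b :=
    (continuous_rpow_const hb.le).comp (continuous_const.mul continuous_id)
  simpa [zero_rpow hb.ne'] using (hcont.tendsto 0).mono_left nhdsWithin_le_nhds

theorem eventually_rpow_le_truncEntropy_add {p M δ : ℝ} (hp : 1 < p) (hδ : 0 < δ) :
    ∀ᶠ ε in 𝓝[>] 0, ∀ η, IsCutoff ε η → ∀ u ∈ Icc 0 M, u ^ p ≤ truncEntropy η p u + δ := by
  have hlim := (tendsto_two_mul_rpow_nhdsGT_zero (sub_pos.2 hp)).const_mul (p * M)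
  rw [mul_zero] at hlim
  filter_upwards [hlim.eventually_lt_const hδ] with ε hε η h u hu
  have hpow : 0 ≤ (2 * ε) ^ (p - 1) := rpow_nonneg (by linarith [h.pos]) _
  calc u ^ p ≤ truncEntropy η p u + p * (u * (2 * ε) ^ (p - 1)) :=
        h.rpow_le_truncEntropy_add hp hu.1
    _ ≤ truncEntropy η p u + p * (M * (2 * ε) ^ (p - 1)) := by gcongr; exact hu.2
    _ ≤ truncEntropy η p u + δ := by linarith

theorem eventually_rpow_mul_le_truncRpow_rpow_add {a r M δ : ℝ} (ha : 0 < a) (hr : 0 ≤ r)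
    (hδ : 0 < δ) :
    ∀ᶠ ε in 𝓝[>] 0, ∀ η, IsCutoff ε η → ∀ u ∈ Icc 0 M,
      u ^ (a * r) ≤ truncRpow η a u ^ r + δ := by
  have hunif := (isCompact_Icc (a := 0) (b := M ^ a)).uniformContinuousOn_of_continuous
    (continuous_rpow_const hr).continuousOn
  obtain ⟨θ, hθ, hclose⟩ := Metric.uniformContinuousOn_iff.1 hunif δ hδ
  filter_upwards [(tendsto_two_mul_rpow_nhdsGT_zero ha).eventually_lt_const hθ]
    with ε hε η h u hu
  have hle := h.truncRpow_le_rpow ha hu.1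
  have huM : u ^ a ≤ M ^ a := rpow_le_rpow hu.1 hu.2 ha.le
  have hdist := hclose (u ^ a) ⟨rpow_nonneg hu.1 a, huM⟩ (truncRpow η a u)
    ⟨h.truncRpow_nonneg ha.le hu.1, hle.trans huM⟩ <| by
      rw [dist_eq, abs_of_nonneg (by linarith)]
      linarith [h.rpow_le_truncRpow_add ha hu.1]
  rw [rpow_mul hu.1]
  linarith [(abs_lt.1 hdist).2]

/-! ### Positive functions vanishing on the boundary -/

/-- A positive `C²` function on the bounded open set `Ω`, continuous up to the boundary and
vanishing there: the shape of a solution of the Dirichlet problem at a fixed time. -/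
structure IsDirichletProfile {E : Type*} [NormedAddCommGroup E] [NormedSpace ℝ E]
    (Ω : Set E) (v : E → ℝ) : Prop where
  isOpen : IsOpen Ω
  isBounded : Bornology.IsBounded Ω
  continuousOn : ContinuousOn v (closure Ω)
  eq_zero : ∀ x ∈ frontier Ω, v x = 0
  pos : ∀ x ∈ Ω, 0 < v x
  contDiffOn : ContDiffOn ℝ 2 v Ω

namespace IsDirichletProfile

variable {E : Type*} [NormedAddCommGroup E] [NormedSpace ℝ E] {Ω : Set E} {v : E → ℝ} {F : ℝ → ℝ}
  {ε : ℝ} {x : E}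

theorem tsupport_indicator_comp_subset (hv : IsDirichletProfile Ω v) (hε : 0 < ε)
    (hF : ∀ s ≤ ε, F s = 0) : tsupport (Ω.indicator (F ∘ v)) ⊆ Ω := by
  have hclosed : IsClosed (closure Ω ∩ v ⁻¹' Ici ε) :=
    hv.continuousOn.preimage_isClosed_of_isClosed isClosed_closure isClosed_Ici
  have hsupp : Function.support (Ω.indicator (F ∘ v)) ⊆ closure Ω ∩ v ⁻¹' Ici ε := by
    rw [support_indicator]
    exact fun x hx => ⟨subset_closure hx.1, le_of_not_ge fun hle => hx.2 (hF _ hle)⟩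
  refine (closure_minimal hsupp hclosed).trans fun x ⟨hx, hvx⟩ => ?_
  by_contra hxΩ
  have hfrontier : x ∈ frontier Ω := ⟨hx, fun h => hxΩ (interior_subset h)⟩
  rw [mem_preimage, hv.eq_zero x hfrontier] at hvx
  exact hε.not_ge hvx

theorem hasCompactSupport_indicator_comp [ProperSpace E] (hv : IsDirichletProfile Ω v) :
    HasCompactSupport (Ω.indicator (F ∘ v)) :=
  HasCompactSupport.intro hv.isBounded.isCompact_closure fun _ hx =>
    indicator_of_notMem (fun h => hx (subset_closure h)) _

theorem indicator_comp_eventuallyEq (hv : IsDirichletProfile Ω v) (hx : x ∈ Ω) :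
    Ω.indicator (F ∘ v) =ᶠ[nhds x] F ∘ v := by
  filter_upwards [hv.isOpen.mem_nhds hx] with y hy using indicator_of_mem hy _

theorem contDiff_indicator_comp (hv : IsDirichletProfile Ω v) (hε : 0 < ε)
    (hF : ∀ s ≤ ε, F s = 0) {n : WithTop ℕ∞} (hn : n ≤ 2) (hFn : ContDiff ℝ n F) :
    ContDiff ℝ n (Ω.indicator (F ∘ v)) := by
  refine contDiff_iff_contDiffAt.2 fun x => ?_
  by_cases hx : x ∈ Ω
  · have hvx := (hv.contDiffOn.contDiffAt (hv.isOpen.mem_nhds hx)).of_le hn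
    exact (hFn.contDiffAt.comp x hvx).congr_of_eventuallyEq (hv.indicator_comp_eventuallyEq hx)
  · have hx' := fun h => hx (hv.tsupport_indicator_comp_subset hε hF h)
    exact contDiffAt_const.congr_of_eventuallyEq (notMem_tsupport_iff_eventuallyEq.1 hx')

theorem differentiableAt (hv : IsDirichletProfile Ω v) (hx : x ∈ Ω) : DifferentiableAt ℝ v x :=
  (hv.contDiffOn.contDiffAt (hv.isOpen.mem_nhds hx)).differentiableAt two_ne_zero

theorem fderiv_indicator_comp (hv : IsDirichletProfile Ω v) (hF : Differentiable ℝ F)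
    (hx : x ∈ Ω) :
    fderiv ℝ (Ω.indicator (F ∘ v)) x = deriv F (v x) • fderiv ℝ v x := by
  rw [(hv.indicator_comp_eventuallyEq hx).fderiv_eq]
  exact ((hF (v x)).hasDerivAt.comp_hasFDerivAt x (hv.differentiableAt hx).hasFDerivAt).fderiv

theorem contDiffOn_rpow (hv : IsDirichletProfile Ω v) (m : ℝ) :
    ContDiffOn ℝ 2 (fun x => v x ^ m) Ω :=
  hv.contDiffOn.rpow_const_of_ne fun x hx => (hv.pos x hx).ne'

theorem fderiv_rpow (hv : IsDirichletProfile Ω v) (m : ℝ) (hx : x ∈ Ω) :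
    fderiv ℝ (fun y => v y ^ m) x = (m * v x ^ (m - 1)) • fderiv ℝ v x :=
  ((hasDerivAt_rpow_const (Or.inl (hv.pos x hx).ne')).comp_hasFDerivAt x
    (hv.differentiableAt hx).hasFDerivAt).fderiv

end IsDirichletProfile

/-! ### Green's identity -/

section Green

variable {E : Type*} [NormedAddCommGroup E] [MeasurableSpace E] [BorelSpace E] {μ : Measure E}
  {U : Set E} {f g : E → ℝ}

theorem integrable_mul_of_tsupport_subset [IsFiniteMeasureOnCompacts μ]
    (hU : IsOpen U) (hf : Continuous f) (hfc : HasCompactSupport f) (hfU : tsupport f ⊆ U)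
    (hg : ContinuousOn g U) : Integrable (fun x => f x * g x) μ := by
  refine Continuous.integrable_of_hasCompactSupport ?_ hfc.mul_right
  refine continuous_of_tsupport fun x hx => ?_
  have hxU : x ∈ U := hfU (tsupport_mul_subset_left hx)
  exact hf.continuousAt.mul (hg.continuousAt (hU.mem_nhds hxU))

theorem integral_mul_fderiv_eq_neg_of_tsupport_subset [NormedSpace ℝ E] [FiniteDimensional ℝ E]
    [μ.IsAddHaarMeasure] (hU : IsOpen U) (hf : ContDiff ℝ 1 f)
    (hfc : HasCompactSupport f) (hfU : tsupport f ⊆ U) (hg : ContDiffOn ℝ 1 g U) (e : E) :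
    ∫ x, f x * fderiv ℝ g x e ∂μ = -∫ x, fderiv ℝ f x e * g x ∂μ := by
  have hf' : Continuous fun x => fderiv ℝ f x e :=
    (hf.continuous_fderiv one_ne_zero).clm_apply continuous_const
  have hg' : ContinuousOn (fun x => fderiv ℝ g x e) U :=
    (hg.continuousOn_fderiv_of_isOpen hU le_rfl).clm_apply continuousOn_const
  have hf'U : tsupport (fun x => fderiv ℝ f x e) ⊆ U :=
    (tsupport_fderiv_apply_subset ℝ e).trans hfU
  exact integral_mul_fderiv_eq_neg_fderiv_mul_of_integrable
    (integrable_mul_of_tsupport_subset hU hf' (hfc.fderiv_apply ℝ e) hf'U hg.continuousOn)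
    (integrable_mul_of_tsupport_subset hU hf.continuous hfc hfU hg')
    (integrable_mul_of_tsupport_subset hU hf.continuous hfc hfU hg.continuousOn)
    (fun x _ => hf.differentiable one_ne_zero x)
    fun x hx => (hg.contDiffAt (hU.mem_nhds (hfU hx))).differentiableAt one_ne_zero

end Green

theorem integral_mul_spaceLap {d : ℕ} {U : Set (EuclideanSpace ℝ (Fin d))}
    {f g : EuclideanSpace ℝ (Fin d) → ℝ} (hU : IsOpen U) (hf : ContDiff ℝ 1 f)
    (hfc : HasCompactSupport f)
    (hfU : tsupport f ⊆ U) (hg : ContDiffOn ℝ 2 g U) :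
    ∫ x, f x * spaceLap g x = -∫ x, ∑ i : Fin d,
      fderiv ℝ f x (EuclideanSpace.single i 1) * fderiv ℝ g x (EuclideanSpace.single i 1) := by
  have hg' (e) : ContDiffOn ℝ 1 (fun x => fderiv ℝ g x e) U :=
    (hg.fderiv_of_isOpen hU (by norm_num)).clm_apply contDiffOn_const
  have hlap (e) : ContinuousOn (fun x => fderiv ℝ (fun y => fderiv ℝ g y e) x e) U :=
    ((hg' e).continuousOn_fderiv_of_isOpen hU le_rfl).clm_apply continuousOn_const
  have hf' (e) : Continuous fun x => fderiv ℝ f x e :=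
    (hf.continuous_fderiv one_ne_zero).clm_apply continuous_const
  simp only [spaceLap, Finset.mul_sum]
  rw [integral_finsetSum _ fun i _ => integrable_mul_of_tsupport_subset hU hf.continuous hfc hfU
      (hlap _), integral_finsetSum _ fun i _ => integrable_mul_of_tsupport_subset hU (hf' _)
      (hfc.fderiv_apply ℝ _) ((tsupport_fderiv_apply_subset ℝ _).trans hfU) (hg' _).continuousOn,
    ← Finset.sum_neg_distrib]
  exact Finset.sum_congr rfl fun i _ =>
    integral_mul_fderiv_eq_neg_of_tsupport_subset hU hf hfc hfU (hg' _) _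

theorem norm_sq_eq_sum_apply_single_sq {ι : Type*} [Fintype ι] [DecidableEq ι]
    (L : StrongDual ℝ (EuclideanSpace ℝ ι)) :
    ‖L‖ ^ 2 = ∑ i, L (EuclideanSpace.single i 1) ^ 2 := by
  simpa only [EuclideanSpace.basisFun_apply] using (EuclideanSpace.basisFun ι ℝ).norm_dual L

theorem IsDirichletProfile.integral_mul_spaceLap_rpow {d : ℕ}
    {Ω : Set (EuclideanSpace ℝ (Fin d))} {v : EuclideanSpace ℝ (Fin d) → ℝ} {G W : ℝ → ℝ}
    {ε m c : ℝ} (hv : IsDirichletProfile Ω v) (hm : m ≠ 0) (hε : 0 < ε)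
    (hG : ContDiff ℝ 1 G) (hG0 : ∀ s ≤ ε, G s = 0)
    (hW : ContDiff ℝ 1 W) (hW0 : ∀ s ≤ ε, W s = 0)
    (hGW : ∀ s, 0 < s → deriv G s * s ^ (m - 1) = c * deriv W s ^ 2) :
    ∫ x in Ω, G (v x) * (spaceLap (fun y => v y ^ m) x / m) =
      -(c * ∫ x, ‖fderiv ℝ (Ω.indicator (W ∘ v)) x‖ ^ 2) := by
  set f := Ω.indicator (G ∘ v) with hf
  have hfΩ : tsupport f ⊆ Ω := hv.tsupport_indicator_comp_subset hε hG0
  have hWΩ := hv.tsupport_indicator_comp_subset hε hW0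
  have hgradient (x) : (∑ i : Fin d, fderiv ℝ f x (EuclideanSpace.single i 1) *
      fderiv ℝ (fun y => v y ^ m) x (EuclideanSpace.single i 1)) =
      m * c * ‖fderiv ℝ (Ω.indicator (W ∘ v)) x‖ ^ 2 := by
    by_cases hx : x ∈ Ω
    · rw [norm_sq_eq_sum_apply_single_sq, Finset.mul_sum, hv.fderiv_rpow m hx,
        hv.fderiv_indicator_comp (hG.differentiable one_ne_zero) hx,
        hv.fderiv_indicator_comp (hW.differentiable one_ne_zero) hx]
      refine Finset.sum_congr rfl fun i _ => ?_
      simp only [_root_.smul_apply, smul_eq_mul]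
      linear_combination m * fderiv ℝ v x (EuclideanSpace.single i 1) ^ 2 * hGW _ (hv.pos x hx)
    · simp [fderiv_of_notMem_tsupport ℝ fun h => hx (hfΩ h),
        fderiv_of_notMem_tsupport ℝ fun h => hx (hWΩ h)]
  calc ∫ x in Ω, G (v x) * (spaceLap (fun y => v y ^ m) x / m)
      = (∫ x, f x * spaceLap (fun y => v y ^ m) x) / m := by
        rw [← integral_indicator hv.isOpen.measurableSet, ← integral_div]
        refine integral_congr_ae (.of_forall fun x => ?_)
        by_cases hx : x ∈ Ω <;> simp [hf, hx, mul_div_assoc]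
    _ = -(c * ∫ x, ‖fderiv ℝ (Ω.indicator (W ∘ v)) x‖ ^ 2) := by
        rw [integral_mul_spaceLap hv.isOpen (hv.contDiff_indicator_comp hε hG0 one_le_two hG)
          hv.hasCompactSupport_indicator_comp hfΩ (hv.contDiffOn_rpow m)]
        rw [integral_congr_ae (.of_forall hgradient), integral_const_mul]
        field_simp

/-! ### The Sobolev inequality on balls -/

section Sobolev

variable {E F : Type*} [NormedAddCommGroup E] [NormedSpace ℝ E]

theorem support_comp_add_smul_subset_unitBall [Zero F]
    {w : E → F} {x₀ : E} {ρ : ℝ} (hρ : 0 < ρ)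
    (hw : Function.support w ⊆ ball x₀ ρ) :
    Function.support (fun y => w (x₀ + ρ • y)) ⊆ ball 0 1 := fun y hy => by
  have hmem : x₀ + ρ • y ∈ ball x₀ ρ := hw hy
  rw [mem_ball, dist_self_add_left, norm_smul, norm_eq_abs, abs_of_pos hρ] at hmem
  simpa using lt_of_mul_lt_mul_left (hmem.trans_eq (mul_one ρ).symm) hρ.le

theorem norm_fderiv_comp_add_smul [NormedAddCommGroup F] [NormedSpace ℝ F]
    (w : E → F) (x₀ y : E) {ρ : ℝ} (hρ : 0 ≤ ρ) :
    ‖fderiv ℝ (fun y => w (x₀ + ρ • y)) y‖ = ρ * ‖fderiv ℝ w (x₀ + ρ • y)‖ := by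
  rw [fderiv_comp_smul (f := fun y => w (x₀ + y)), fderiv_comp_add_left, norm_smul, norm_eq_abs,
    abs_of_nonneg hρ]

variable [FiniteDimensional ℝ E] [MeasurableSpace E] [BorelSpace E] [NormedAddCommGroup F]
  [NormedSpace ℝ F] (μ : Measure E) [μ.IsAddHaarMeasure] {q r : ℝ}

theorem integral_comp_add_smul {G : Type*} [NormedAddCommGroup G] [NormedSpace ℝ G] (f : E → G)
    (x₀ : E) {ρ : ℝ} (hρ : 0 ≤ ρ) :
    ∫ y, f (x₀ + ρ • y) ∂μ = (ρ ^ Module.finrank ℝ E)⁻¹ • ∫ x, f x ∂μ := by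
  rw [Measure.integral_comp_smul μ (fun y => f (x₀ + y)), integral_add_left_eq_self,
    abs_of_nonneg (by positivity)]

theorem exists_integral_rpow_le_integral_fderiv_of_support_subset_unitBall
    [FiniteDimensional ℝ F] (hq : 1 ≤ q) (hqE : q < Module.finrank ℝ E) (hr : 0 < r)
    (hqr : q⁻¹ - (Module.finrank ℝ E : ℝ)⁻¹ ≤ r⁻¹) :
    ∃ C > 0, ∀ w : E → F, ContDiff ℝ 1 w → Function.support w ⊆ ball 0 1 →
      (∫ x, ‖w x‖ ^ r ∂μ) ^ r⁻¹ ≤ C * (∫ x, ‖fderiv ℝ w x‖ ^ q ∂μ) ^ q⁻¹ := by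
  lift q to NNReal using by linarith
  lift r to NNReal using hr.le
  set c := eLpNormLESNormFDerivOfLeConst F μ (ball (0 : E) 1) q r
  refine ⟨c + 1, by positivity, fun w hw hsupp => ?_⟩
  have hwc : HasCompactSupport w := .of_support_subset_isCompact (isCompact_closedBall 0 1)
    (hsupp.trans ball_subset_closedBall)
  have hq0 : (q : ENNReal) ≠ 0 := by
    simpa using (show (0 : ℝ) < q by linarith).ne'
  have hr0 : (r : ENNReal) ≠ 0 := by simpa using hr.ne'
  have hsob := eLpNorm_le_eLpNorm_fderiv_of_le μ hw hsupp (p := q) (q := r)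
    (by exact_mod_cast hq) (by exact_mod_cast hqE) (by simpa using hqr) isBounded_ball
  rw [(hw.continuous.memLp_of_hasCompactSupport hwc).eLpNorm_eq_integral_rpow_norm hr0
      ENNReal.coe_ne_top,
    ((hw.continuous_fderiv one_ne_zero).memLp_of_hasCompactSupport
      (hwc.fderiv ℝ)).eLpNorm_eq_integral_rpow_norm hq0 ENNReal.coe_ne_top,
    ← ENNReal.ofReal_coe_nnreal (p := c), ← ENNReal.ofReal_mul c.coe_nonneg,
    ENNReal.ofReal_le_ofReal_iff (by positivity)] at hsob
  simp only [ENNReal.coe_toReal] at hsob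
  exact hsob.trans (by gcongr; linarith)

theorem exists_integral_rpow_le_integral_fderiv_of_support_subset_ball
    [FiniteDimensional ℝ F] (hq : 1 ≤ q) (hqE : q < Module.finrank ℝ E) (hr : 0 < r)
    (hqr : q⁻¹ - (Module.finrank ℝ E : ℝ)⁻¹ ≤ r⁻¹) :
    ∃ C > 0, ∀ (x₀ : E) (ρ : ℝ) (w : E → F), 0 < ρ → ContDiff ℝ 1 w →
      Function.support w ⊆ ball x₀ ρ →
      (∫ x, ‖w x‖ ^ r ∂μ) ^ r⁻¹ ≤ C * ρ ^ (1 - Module.finrank ℝ E * (q⁻¹ - r⁻¹)) *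
        (∫ x, ‖fderiv ℝ w x‖ ^ q ∂μ) ^ q⁻¹ := by
  obtain ⟨C, hC, hunit⟩ :=
    exists_integral_rpow_le_integral_fderiv_of_support_subset_unitBall (F := F) μ hq hqE hr hqr
  refine ⟨C, hC, fun x₀ ρ w hρ hw hsupp => ?_⟩
  set n := Module.finrank ℝ E
  have hscaled := hunit (fun y => w (x₀ + ρ • y))
    (hw.comp (contDiff_const.add (contDiff_const_smul ρ)))
    (support_comp_add_smul_subset_unitBall hρ hsupp)
  simp_rw [norm_fderiv_comp_add_smul w x₀ _ hρ.le, mul_rpow hρ.le (norm_nonneg _),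
    integral_const_mul] at hscaled
  rw [integral_comp_add_smul μ (fun x => ‖w x‖ ^ r) x₀ hρ.le,
    integral_comp_add_smul μ (fun x => ‖fderiv ℝ w x‖ ^ q) x₀ hρ.le] at hscaled
  set I := ∫ x, ‖w x‖ ^ r ∂μ
  set J := ∫ x, ‖fderiv ℝ w x‖ ^ q ∂μ
  have hpow {K b : ℝ} (hK : 0 ≤ K) : ((ρ ^ n)⁻¹ * K) ^ b = ρ ^ (-(n * b)) * K ^ b := by
    rw [mul_rpow (by positivity) hK, ← rpow_natCast, ← rpow_neg hρ.le, ← rpow_mul hρ.le, neg_mul]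
  have hI : 0 ≤ I := integral_nonneg fun x => by positivity
  have hJ : 0 ≤ J := integral_nonneg fun x => by positivity
  rw [smul_eq_mul, smul_eq_mul, hpow hI, mul_rpow (by positivity) (by positivity), hpow hJ,
    rpow_rpow_inv hρ.le (by linarith)] at hscaled
  calc I ^ r⁻¹ = ρ ^ (n * r⁻¹) * (ρ ^ (-(n * r⁻¹)) * I ^ r⁻¹) := by
        rw [← mul_assoc, ← rpow_add hρ, add_neg_cancel, rpow_zero, one_mul]
    _ ≤ ρ ^ (n * r⁻¹) * (C * (ρ * (ρ ^ (-(n * q⁻¹)) * J ^ q⁻¹))) := by gcongr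
    _ = C * (ρ ^ (n * r⁻¹) * ρ ^ (1 : ℝ) * ρ ^ (-(n * q⁻¹))) * J ^ q⁻¹ := by
        rw [rpow_one]
        ring
    _ = C * ρ ^ (1 - n * (q⁻¹ - r⁻¹)) * J ^ q⁻¹ := by
        rw [← rpow_add hρ, ← rpow_add hρ]
        ring_nf

theorem exists_integral_rpow_le_integral_fderiv_sq_of_support_subset_ball [FiniteDimensional ℝ F]
    (hE : 2 < Module.finrank ℝ E) (hr : 0 < r)
    (hr2 : 2⁻¹ - (Module.finrank ℝ E : ℝ)⁻¹ ≤ r⁻¹) :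
    ∃ C > 0, ∀ (x₀ : E) (ρ : ℝ) (w : E → F), 0 < ρ → ContDiff ℝ 1 w →
      Function.support w ⊆ ball x₀ ρ →
      (∫ x, ‖w x‖ ^ r ∂μ) ^ (2 / r) ≤
        C * ρ ^ (2 - Module.finrank ℝ E * (1 - 2 / r)) * ∫ x, ‖fderiv ℝ w x‖ ^ 2 ∂μ := by
  obtain ⟨C, hC, hsob⟩ := exists_integral_rpow_le_integral_fderiv_of_support_subset_ball (F := F)
    μ one_le_two (mod_cast hE) hr hr2
  refine ⟨C ^ 2, by positivity, fun x₀ ρ w hρ hw hsupp => ?_⟩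
  have hsq {x : ℝ} (hx : 0 ≤ x) (b : ℝ) : (x ^ b) ^ 2 = x ^ (b * 2) := by
    rw [← rpow_two, ← rpow_mul hx]
  have hI : 0 ≤ ∫ x, ‖w x‖ ^ r ∂μ := integral_nonneg fun x => by positivity
  have hJ : 0 ≤ ∫ x, ‖fderiv ℝ w x‖ ^ 2 ∂μ := integral_nonneg fun x => by positivity
  have hle := pow_le_pow_left₀ (by positivity) (hsob x₀ ρ w hρ hw hsupp) 2
  simp only [rpow_two] at hle
  rw [mul_pow, mul_pow, hsq hI, hsq hρ.le, hsq hJ, inv_mul_cancel₀ two_ne_zero, rpow_one] at hle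
  have hexp : (1 - Module.finrank ℝ E * (2⁻¹ - r⁻¹)) * 2 =
      2 - Module.finrank ℝ E * (1 - 2 / r) := by ring
  rwa [hexp, inv_mul_eq_div] at hle

end Sobolev

/-! ### Dissipation of the truncated entropy -/

theorem exists_integral_comp_rpow_le_integral_fderiv_sq {E : Type*} [NormedAddCommGroup E]
    [NormedSpace ℝ E] [FiniteDimensional ℝ E] [MeasurableSpace E] [BorelSpace E] (μ : Measure E)
    [μ.IsAddHaarMeasure] {r : ℝ} (hE : 2 < Module.finrank ℝ E) (hr : 0 < r)
    (hr2 : 2⁻¹ - (Module.finrank ℝ E : ℝ)⁻¹ ≤ r⁻¹) :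
    ∃ C > 0, ∀ (x₀ : E) (ρ : ℝ) (Ω : Set E) (v : E → ℝ) (F : ℝ → ℝ) (ε : ℝ), 0 < ρ →
      Ω ⊆ ball x₀ ρ → IsDirichletProfile Ω v → 0 < ε → ContDiff ℝ 1 F → (∀ s ≤ ε, F s = 0) →
      (∀ s > 0, 0 ≤ F s) →
      (∫ x in Ω, F (v x) ^ r ∂μ) ^ (2 / r) ≤ C * ρ ^ (2 - Module.finrank ℝ E * (1 - 2 / r)) *
        ∫ x, ‖fderiv ℝ (Ω.indicator (F ∘ v)) x‖ ^ 2 ∂μ := by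
  obtain ⟨C, hC, hsob⟩ :=
    exists_integral_rpow_le_integral_fderiv_sq_of_support_subset_ball (F := ℝ) μ hE hr hr2
  refine ⟨C, hC, fun x₀ ρ Ω v F ε hρ hΩ hv hε hF hF0 hFpos => ?_⟩
  have hnorm : ∫ x in Ω, F (v x) ^ r ∂μ = ∫ x, ‖Ω.indicator (F ∘ v) x‖ ^ r ∂μ := by
    rw [← integral_indicator hv.isOpen.measurableSet]
    refine integral_congr_ae (.of_forall fun x => ?_)
    by_cases hx : x ∈ Ω
    · simp [hx, abs_of_nonneg (hFpos _ (hv.pos x hx))]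
    · simp [hx, zero_rpow hr.ne']
  rw [hnorm]
  exact hsob x₀ ρ _ hρ (hv.contDiff_indicator_comp hε hF0 one_le_two hF)
    (support_indicator_subset.trans hΩ)

-- For `2a = p + m - 1` the product `uᵖ⁻² uᵐ⁻¹ |∇u|²` is a multiple of `|∇uᵃ|²`; squaring the
-- cutoff in the entropy keeps this identity exact after truncation.
theorem IsCutoff.deriv_truncRpow_sq_mul_rpow {ε a m p s : ℝ} {η : ℝ → ℝ} (h : IsCutoff ε η)
    (ha : a ≠ 0) (hapm : 2 * a = p + m - 1) (hs : 0 < s) :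
    deriv (fun u => p * truncRpow (η ^ 2) (p - 1) u) s * s ^ (m - 1) =
      p * (p - 1) / a ^ 2 * deriv (truncRpow η a) s ^ 2 := by
  have hpow : s ^ (p - 1 - 1) * s ^ (m - 1) = (s ^ (a - 1)) ^ 2 := by
    rw [← rpow_add hs, ← rpow_two, ← rpow_mul hs.le]
    congr 1
    linarith
  rw [((h.sq.hasDerivAt_truncRpow (p - 1) s).const_mul p).deriv,
    (h.hasDerivAt_truncRpow a s).deriv, Pi.pow_apply]
  field_simp
  linear_combination p * (p - 1) * η s ^ 2 * hpow

theorem exists_integral_mul_spaceLap_rpow_le {d : ℕ} (hd : 3 ≤ d) {a m p : ℝ} (hm : m ≠ 0)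
    (hp : 1 < p) (ha : 0 < a) (hapm : 2 * a = p + m - 1) (hpc : d * (1 - m) / 2 ≤ p) :
    ∃ k > 0, ∀ (x₀ : EuclideanSpace ℝ (Fin d)) (ρ : ℝ) (Ω : Set (EuclideanSpace ℝ (Fin d)))
      (v : EuclideanSpace ℝ (Fin d) → ℝ) (ε : ℝ) (η : ℝ → ℝ), 0 < ρ → Ω ⊆ ball x₀ ρ →
      IsDirichletProfile Ω v → IsCutoff ε η →
      ∫ x in Ω, p * truncRpow (η ^ 2) (p - 1) (v x) * (spaceLap (fun y => v y ^ m) x / m) ≤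
        -(k * ρ ^ (-2 * (1 - d * (1 - m) / (2 * p))) *
          (∫ x in Ω, truncRpow η a (v x) ^ (p / a)) ^ (2 * a / p)) := by
  have hp0 : 0 < p := by linarith
  obtain ⟨C, hC, hsob⟩ := exists_integral_comp_rpow_le_integral_fderiv_sq
    (E := EuclideanSpace ℝ (Fin d)) (r := p / a) volume (by rw [finrank_euclideanSpace_fin]; omega)
    (by positivity) (by
      have hd0 : (d : ℝ) ≠ 0 := by positivity
      rw [finrank_euclideanSpace_fin, inv_div]
      field_simp
      linear_combination 2 * hpc - d * hapm)
  have hc : 0 < p * (p - 1) / a ^ 2 := div_pos (mul_pos hp0 (by linarith)) (by positivity)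
  refine ⟨p * (p - 1) / a ^ 2 / C, by positivity, fun x₀ ρ Ω v ε η hρ hΩ hv hη => ?_⟩
  have hle := hsob x₀ ρ Ω v _ ε hρ hΩ hv hη.pos (hη.contDiff_truncRpow a)
    (fun s => hη.truncRpow_eq_zero) fun s hs => hη.truncRpow_nonneg ha.le (le_of_lt hs)
  have hexp : 2 - d * (1 - 2 * a / p) = -(-2 * (1 - d * (1 - m) / (2 * p))) := by
    rw [hapm]
    field_simp
    ring
  rw [finrank_euclideanSpace_fin, div_div_eq_mul_div, hexp, rpow_neg hρ.le] at hle
  rw [hv.integral_mul_spaceLap_rpow hm hη.pos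
    (contDiff_const.mul (hη.sq.contDiff_truncRpow (p - 1)))
    (fun s hs => by rw [hη.sq.truncRpow_eq_zero hs, mul_zero]) (hη.contDiff_truncRpow a)
    (fun s => hη.truncRpow_eq_zero) fun s => hη.deriv_truncRpow_sq_mul_rpow ha.ne' hapm,
    neg_le_neg_iff, div_mul_eq_mul_div, div_mul_eq_mul_div, div_le_iff₀ hC, mul_assoc, mul_assoc]
  refine mul_le_mul_of_nonneg_left ?_ hc.le
  rwa [← le_inv_mul_iff₀ (by positivity), mul_comm _ C, mul_left_comm, ← mul_assoc]

/-! ### Space-time functions and their spatial integrals -/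

theorem integrableOn_of_continuousOn_closure {X : Type*} [MetricSpace X] [ProperSpace X]
    [MeasurableSpace X] [BorelSpace X] {μ : Measure X} [IsFiniteMeasureOnCompacts μ] {Ω : Set X}
    {f : X → ℝ} (hΩb : Bornology.IsBounded Ω) (hf : ContinuousOn f (closure Ω)) :
    IntegrableOn f Ω μ :=
  (hf.integrableOn_compact hΩb.isCompact_closure).mono_set subset_closure

theorem continuousOn_setIntegral_of_continuousOn_prod {X Y : Type*} [MetricSpace X]
    [ProperSpace X] [MeasurableSpace X] [BorelSpace X] {μ : Measure X}
    [IsFiniteMeasureOnCompacts μ] [TopologicalSpace Y] [FirstCountableTopology Y] {J : Set Y}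
    {Ω : Set X} {W : Y × X → ℝ} (hJ : IsCompact J) (hΩ : MeasurableSet Ω)
    (hΩb : Bornology.IsBounded Ω) (hWc : ContinuousOn W (J ×ˢ closure Ω)) :
    ContinuousOn (fun t => ∫ x in Ω, W (t, x) ∂μ) J := by
  obtain ⟨C, hC⟩ := (hJ.prod hΩb.isCompact_closure).exists_bound_of_continuousOn hWc
  refine continuousOn_of_dominated (bound := fun _ => C) (fun t ht => ?_) (fun t ht => ?_)
    (integrableOn_const hΩb.measure_lt_top.ne) ?_
  · exact (integrableOn_of_continuousOn_closure hΩb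
      (hWc.comp (by fun_prop) fun x hx => ⟨ht, hx⟩)).aestronglyMeasurable
  · filter_upwards [ae_restrict_mem hΩ] with x hx using hC (t, x) ⟨ht, subset_closure hx⟩
  · filter_upwards [ae_restrict_mem hΩ] with x hx
    exact hWc.comp (by fun_prop) fun t ht => ⟨ht, subset_closure hx⟩

theorem setIntegral_le_setIntegral_add_const {α : Type*} [MeasurableSpace α] {μ : Measure α}
    {s : Set α} {f g : α → ℝ} {δ : ℝ} (hs : MeasurableSet s) (hμs : μ s ≠ ⊤)
    (hf : IntegrableOn f s μ) (hg : IntegrableOn g s μ) (hfg : ∀ x ∈ s, f x ≤ g x + δ) :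
    ∫ x in s, f x ∂μ ≤ ∫ x in s, g x ∂μ + δ * μ.real s := by
  have hδ : IntegrableOn (fun _ => δ) s μ := integrableOn_const hμs
  calc ∫ x in s, f x ∂μ ≤ ∫ x in s, (g x + δ) ∂μ := setIntegral_mono_on hf (hg.add hδ) hs hfg
    _ = ∫ x in s, g x ∂μ + δ * μ.real s := by
        rw [integral_add hg hδ, setIntegral_const, smul_eq_mul, mul_comm]

section SpaceTime

variable {E : Type*} [NormedAddCommGroup E] [NormedSpace ℝ E] {W : ℝ × E → ℝ} {F : ℝ → ℝ}
  {I J : Set ℝ} {Ω : Set E} {ε t : ℝ} {x : E}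

theorem hasDerivAt_comp_prodMk_left (hW : DifferentiableAt ℝ W (t, x)) :
    HasDerivAt (fun s => W (s, x)) (fderiv ℝ W (t, x) (1, 0)) t :=
  hW.hasFDerivAt.comp_hasDerivAt t ((hasDerivAt_id t).prodMk (hasDerivAt_const t x))

theorem continuousOn_deriv_comp_prodMk_left {Q : Set (ℝ × E)} (hQ : IsOpen Q)
    (hW : ContDiffOn ℝ 1 W Q) :
    ContinuousOn (fun q : ℝ × E => deriv (fun s => W (s, q.2)) q.1) Q := by
  refine ((hW.continuousOn_fderiv_of_isOpen hQ le_rfl).clm_apply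
    (continuousOn_const (c := ((1 : ℝ), (0 : E))))).congr fun q hq => ?_
  exact (hasDerivAt_comp_prodMk_left
    ((hW.contDiffAt (hQ.mem_nhds hq)).differentiableAt one_ne_zero)).deriv

-- Only the superlevel set `{W ≥ ε}` contributes, and it stays away from the lateral boundary.
theorem exists_bound_deriv_mul_deriv [ProperSpace E] (hI : IsOpen I) (hΩ : IsOpen Ω)
    (hΩb : Bornology.IsBounded Ω) (hWc : ContinuousOn W (I ×ˢ closure Ω))
    (hW : ContDiffOn ℝ 1 W (I ×ˢ Ω)) (hW0 : ∀ t ∈ I, ∀ x ∈ frontier Ω, W (t, x) = 0)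
    (hε : 0 < ε) (hF : ContDiff ℝ 1 F) (hF0 : ∀ s ≤ ε, deriv F s = 0)
    (hJ : IsCompact J) (hJI : J ⊆ I) :
    ∃ C, ∀ t ∈ J, ∀ x ∈ Ω, ‖deriv F (W (t, x)) * deriv (fun s => W (s, x)) t‖ ≤ C := by
  set K := (J ×ˢ closure Ω) ∩ W ⁻¹' Ici ε
  have hK : IsCompact K := by
    have hcyl := hJ.prod hΩb.isCompact_closure
    exact hcyl.of_isClosed_subset ((hWc.mono (prod_mono_left hJI)).preimage_isClosed_of_isClosed
      hcyl.isClosed isClosed_Ici) inter_subset_left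
  have hKΩ : K ⊆ I ×ˢ Ω := by
    rintro ⟨t, x⟩ ⟨⟨ht, hx⟩, hge : ε ≤ W (t, x)⟩
    refine ⟨hJI ht, by_contra fun hxΩ => ?_⟩
    rw [hW0 t (hJI ht) x ⟨hx, by rwa [hΩ.interior_eq]⟩] at hge
    exact hε.not_ge hge
  obtain ⟨C, hC⟩ := hK.exists_bound_of_continuousOn
    (f := fun q : ℝ × E => deriv F (W q) * deriv (fun s => W (s, q.2)) q.1)
    ((((hF.continuous_deriv le_rfl).comp_continuousOn hW.continuousOn).mul
      (continuousOn_deriv_comp_prodMk_left (hI.prod hΩ) hW)).mono hKΩ)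
  refine ⟨max C 0, fun t ht x hx => ?_⟩
  by_cases hge : ε ≤ W (t, x)
  · exact (hC (t, x) ⟨⟨ht, subset_closure hx⟩, hge⟩).trans (le_max_left _ _)
  · rw [hF0 _ (not_le.1 hge).le, zero_mul, norm_zero]
    exact le_max_right _ _

variable [MeasurableSpace E] [BorelSpace E] {μ : Measure E} [IsFiniteMeasureOnCompacts μ]

theorem hasDerivAt_setIntegral_comp [ProperSpace E] (hI : IsOpen I) (hΩ : IsOpen Ω)
    (hΩb : Bornology.IsBounded Ω) (hWc : ContinuousOn W (I ×ˢ closure Ω))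
    (hW : ContDiffOn ℝ 1 W (I ×ˢ Ω)) (hW0 : ∀ t ∈ I, ∀ x ∈ frontier Ω, W (t, x) = 0)
    (hε : 0 < ε) (hF : ContDiff ℝ 1 F) (hF0 : ∀ s ≤ ε, deriv F s = 0) (ht : t ∈ I) :
    HasDerivAt (fun τ => ∫ x in Ω, F (W (τ, x)) ∂μ)
      (∫ x in Ω, deriv F (W (t, x)) * deriv (fun s => W (s, x)) t ∂μ) t := by
  obtain ⟨J, hJ, hJI, hJc⟩ := local_compact_nhds (hI.mem_nhds ht)
  obtain ⟨C, hC⟩ := exists_bound_deriv_mul_deriv hI hΩ hΩb hWc hW hW0 hε hF hF0 hJc hJI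
  have hint (τ) (hτ : τ ∈ I) : IntegrableOn (fun x => F (W (τ, x))) Ω μ :=
    integrableOn_of_continuousOn_closure hΩb
      (hF.continuous.comp_continuousOn (hWc.comp (by fun_prop) fun x hx => ⟨hτ, hx⟩))
  have hderiv : ContinuousOn (fun x => deriv F (W (t, x)) * deriv (fun s => W (s, x)) t) Ω :=
    ((hF.continuous_deriv le_rfl).comp_continuousOn
      (hW.continuousOn.comp (by fun_prop) fun x hx => ⟨ht, hx⟩)).mul
    ((continuousOn_deriv_comp_prodMk_left (hI.prod hΩ) hW).comp
      (f := fun x => (t, x)) (by fun_prop) fun x hx => ⟨ht, hx⟩)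
  refine (hasDerivAt_integral_of_dominated_loc_of_deriv_le (bound := fun _ => C)
    (F := fun τ x => F (W (τ, x)))
    (F' := fun τ x => deriv F (W (τ, x)) * deriv (fun s => W (s, x)) τ) hJ
    ?_ (hint t ht) (hderiv.aestronglyMeasurable hΩ.measurableSet) ?_
    (integrableOn_const hΩb.measure_lt_top.ne) ?_).2
  · filter_upwards [hI.mem_nhds ht] with τ hτ using (hint τ hτ).aestronglyMeasurable
  · filter_upwards [ae_restrict_mem hΩ.measurableSet] with x hx τ hτ using hC τ hτ x hx
  · filter_upwards [ae_restrict_mem hΩ.measurableSet] with x hx τ hτ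
    have hWd : DifferentiableAt ℝ W (τ, x) :=
      (hW.contDiffAt ((hI.prod hΩ).mem_nhds ⟨hJI hτ, hx⟩)).differentiableAt one_ne_zero
    exact ((hF.differentiable one_ne_zero) (W (τ, x))).hasDerivAt.comp τ
      (hasDerivAt_comp_prodMk_left hWd).differentiableAt.hasDerivAt

end SpaceTime

/-! ### Differential inequalities -/

theorem antitoneOn_Icc_of_antitoneOn_Ioo {α β : Type*} [LinearOrder α] [TopologicalSpace α]
    [OrderTopology α] [DenselyOrdered α] [Preorder β] [TopologicalSpace β]
    [OrderClosedTopology β] {f : α → β} {a b : α} (hf : ContinuousOn f (Icc a b))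
    (hanti : AntitoneOn f (Ioo a b)) : AntitoneOn f (Icc a b) := by
  intro s hs t ht hst
  rcases hst.eq_or_lt with rfl | hlt
  · exact le_rfl
  obtain ⟨c, hsc, hct⟩ := exists_between hlt
  have hc : c ∈ Ioo a b := ⟨hs.1.trans_lt hsc, hct.trans_le ht.2⟩
  have : (𝓝[Ioo c t] t).NeBot := right_nhdsWithin_Ioo_neBot hct
  have : (𝓝[Ioo s c] s).NeBot := left_nhdsWithin_Ioo_neBot hsc
  have htc : f t ≤ f c := by
    have hsub : Ioo c t ⊆ Icc a b := fun x hx => ⟨hc.1.le.trans hx.1.le, hx.2.le.trans ht.2⟩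
    refine le_of_tendsto ((hf t ht).mono hsub) ?_
    filter_upwards [self_mem_nhdsWithin] with x hx
    exact hanti hc ⟨hc.1.trans hx.1, hx.2.trans_le ht.2⟩ hx.1.le
  have hcs : f c ≤ f s := by
    have hsub : Ioo s c ⊆ Icc a b := fun x hx => ⟨hs.1.trans hx.1.le, hx.2.le.trans hc.2.le⟩
    refine ge_of_tendsto ((hf s hs).mono hsub) ?_
    filter_upwards [self_mem_nhdsWithin] with x hx
    exact hanti ⟨hs.1.trans_lt hx.1, hx.2.trans hc.2⟩ hc hx.2.le
  exact htc.trans hcs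

theorem rpow_one_sub_sub_le_of_hasDerivAt_le {Z Z' : ℝ → ℝ} {s t k γ : ℝ} (hst : s ≤ t)
    (hγ : γ < 1) (hZ : ∀ τ ∈ Icc s t, HasDerivAt Z (Z' τ) τ) (hpos : ∀ τ ∈ Icc s t, 0 < Z τ)
    (hle : ∀ τ ∈ Icc s t, Z' τ ≤ -(k * Z τ ^ γ)) :
    Z t ^ (1 - γ) - Z s ^ (1 - γ) ≤ -((1 - γ) * k * (t - s)) := by
  have hderiv (τ) (hτ : τ ∈ Icc s t) :
      HasDerivAt (fun τ => Z τ ^ (1 - γ)) (Z' τ * (1 - γ) * Z τ ^ (1 - γ - 1)) τ :=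
    (hZ τ hτ).rpow_const (Or.inl (hpos τ hτ).ne')
  have hmean := (convex_Icc s t).image_sub_le_mul_sub_of_deriv_le (C := -((1 - γ) * k))
    (fun τ hτ => (hderiv τ hτ).continuousAt.continuousWithinAt)
    (fun τ hτ => (hderiv τ (interior_subset hτ)).differentiableAt.differentiableWithinAt)
    (fun τ hτ => ?_) s (left_mem_Icc.2 hst) t (right_mem_Icc.2 hst) hst
  · linarith
  · have hτ := interior_subset hτ
    have hZpos := hpos τ hτ
    have hcancel : Z τ ^ γ * Z τ ^ (1 - γ - 1) = 1 := by
      rw [← rpow_add hZpos]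
      simp
    have : 0 ≤ 1 - γ := by linarith
    rw [(hderiv τ hτ).deriv]
    calc Z' τ * (1 - γ) * Z τ ^ (1 - γ - 1)
        ≤ -(k * Z τ ^ γ) * (1 - γ) * Z τ ^ (1 - γ - 1) := by
          gcongr
          exact hle τ hτ
      _ = -((1 - γ) * k) := by linear_combination -((1 - γ) * k) * hcancel

theorem rpow_one_sub_sub_le_of_forall_approx {Y : ℝ → ℝ} {s t k γ : ℝ} (hst : s ≤ t)
    (hk : 0 ≤ k) (hγ0 : 0 ≤ γ) (hγ1 : γ < 1) (hY : ContinuousOn Y (Icc s t))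
    (hpos : ∀ τ ∈ Icc s t, 0 < Y τ)
    (happrox : ∀ δ > 0, ∃ Z Z' X : ℝ → ℝ, ∀ τ ∈ Icc s t, HasDerivAt Z (Z' τ) τ ∧
      Z' τ ≤ -(k * X τ ^ γ) ∧ Z τ ≤ Y τ ∧ Y τ ≤ Z τ + δ ∧ Y τ ≤ X τ + δ) :
    Y t ^ (1 - γ) - Y s ^ (1 - γ) ≤ -((1 - γ) * k * (t - s)) := by
  obtain ⟨τ₀, hτ₀, hmin⟩ := isCompact_Icc.exists_isMinOn (nonempty_Icc.2 hst) hY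
  have hlim : Filter.Tendsto (fun δ => (Y t - 2 * δ) ^ (1 - γ) - Y s ^ (1 - γ)) (𝓝[>] 0)
      (𝓝 (Y t ^ (1 - γ) - Y s ^ (1 - γ))) := by
    refine (Filter.Tendsto.rpow_const ?_ (Or.inr (by linarith))).sub_const _
    have hlin : Continuous fun δ : ℝ => Y t - 2 * δ := by fun_prop
    simpa using (hlin.tendsto 0).mono_left nhdsWithin_le_nhds
  refine le_of_tendsto hlim ?_
  filter_upwards [Ioo_mem_nhdsGT (half_pos (hpos τ₀ hτ₀))] with δ hδ
  obtain ⟨Z, Z', X, h⟩ := happrox δ hδ.1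
  have hZpos (τ) (hτ : τ ∈ Icc s t) : 0 < Z τ - δ := by
    have hτmin : Y τ₀ ≤ Y τ := hmin hτ
    linarith [hδ.2, (h τ hτ).2.2.2.1]
  have hs := left_mem_Icc.2 hst
  have ht := right_mem_Icc.2 hst
  have hτmin : Y τ₀ ≤ Y t := hmin ht
  calc (Y t - 2 * δ) ^ (1 - γ) - Y s ^ (1 - γ)
      ≤ (Z t - δ) ^ (1 - γ) - (Z s - δ) ^ (1 - γ) := by
        refine sub_le_sub ?_ ?_ <;> refine rpow_le_rpow ?_ ?_ (by linarith)
        · linarith [hδ.2]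
        · linarith [(h t ht).2.2.2.1]
        · exact (hZpos s hs).le
        · linarith [hδ.1, (h s hs).2.2.1]
    _ ≤ -((1 - γ) * k * (t - s)) := by
        refine rpow_one_sub_sub_le_of_hasDerivAt_le hst hγ1
          (fun τ hτ => (h τ hτ).1.sub_const δ) hZpos fun τ hτ => (h τ hτ).2.1.trans ?_
        have hZX : Z τ - δ ≤ X τ := by linarith [(h τ hτ).2.2.1, (h τ hτ).2.2.2.2]
        have := rpow_le_rpow (hZpos τ hτ).le hZX hγ0
        gcongr

/-! ### Decay of the `Lᵖ` norm -/

/-- A classical solution on `(0, T) × Ω` of the homogeneous Dirichlet problem for the fast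
diffusion equation on a bounded open set `Ω`, continuous up to the parabolic boundary. The
boundary condition is imposed only for `t ∈ (0, T)`, so the initial datum need not vanish on
`frontier Ω` and extinction at time `T` is not part of the notion. -/
structure IsDirichletSolOn {d : ℕ} (m : ℝ) (Ω : Set (EuclideanSpace ℝ (Fin d))) (T : ℝ)
    (u : ℝ → EuclideanSpace ℝ (Fin d) → ℝ) : Prop where
  isOpen : IsOpen Ω
  isBounded : Bornology.IsBounded Ω
  nonneg : ∀ t ∈ Icc 0 T, ∀ x ∈ Ω, 0 ≤ u t x
  continuousOn : ContinuousOn (fun q : ℝ × EuclideanSpace ℝ (Fin d) => u q.1 q.2)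
    (Icc 0 T ×ˢ closure Ω)
  isFDESol : IsFDESolM m (Ioo 0 T ×ˢ Ω) u
  eq_zero : ∀ t ∈ Ioo 0 T, ∀ x ∈ frontier Ω, u t x = 0

theorem IsDirichletSolM.isDirichletSolOn {d : ℕ} {m ρ T : ℝ} {x₀ : EuclideanSpace ℝ (Fin d)}
    {u : ℝ → EuclideanSpace ℝ (Fin d) → ℝ} {u₀ : EuclideanSpace ℝ (Fin d) → ℝ}
    (h : IsDirichletSolM m x₀ ρ T u u₀) (hρ : ρ ≠ 0) : IsDirichletSolOn m (ball x₀ ρ) T u where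
  isOpen := isOpen_ball
  isBounded := isBounded_ball
  nonneg t ht x hx := h.1 t ht x (ball_subset_closedBall hx)
  continuousOn := by
    rw [closure_ball x₀ hρ]
    exact h.2.1
  isFDESol := h.2.2.1
  eq_zero t ht x hx := h.2.2.2.2.1 t (Ioo_subset_Ioc_self ht) x (by rwa [← frontier_ball x₀ hρ])

namespace IsDirichletSolOn

variable {d : ℕ} {m p T t : ℝ} {Ω : Set (EuclideanSpace ℝ (Fin d))}
  {u : ℝ → EuclideanSpace ℝ (Fin d) → ℝ}

theorem continuousOn_apply (h : IsDirichletSolOn m Ω T u) (ht : t ∈ Icc 0 T) :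
    ContinuousOn (u t) (closure Ω) :=
  h.continuousOn.comp (f := fun x => (t, x)) (by fun_prop) fun x hx => ⟨ht, hx⟩

theorem isDirichletProfile (h : IsDirichletSolOn m Ω T u) (ht : t ∈ Ioo 0 T) :
    IsDirichletProfile Ω (u t) where
  isOpen := h.isOpen
  isBounded := h.isBounded
  continuousOn := h.continuousOn_apply (Ioo_subset_Icc_self ht)
  eq_zero := h.eq_zero t ht
  pos x hx := h.isFDESol.1 (t, x) ⟨ht, hx⟩
  contDiffOn := (contDiffOn_infty.1 h.isFDESol.2.1 2).comp (f := fun x => (t, x))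
    (by fun_prop) fun x hx => ⟨ht, hx⟩

theorem integrableOn_comp {F : ℝ → ℝ} (h : IsDirichletSolOn m Ω T u) (hF : Continuous F)
    (ht : t ∈ Icc 0 T) : IntegrableOn (fun x => F (u t x)) Ω :=
  integrableOn_of_continuousOn_closure h.isBounded
    (hF.comp_continuousOn (h.continuousOn_apply ht))

theorem continuousOn_integral_rpow (h : IsDirichletSolOn m Ω T u) (hp : 0 ≤ p) :
    ContinuousOn (fun t => ∫ x in Ω, u t x ^ p) (Icc 0 T) :=
  continuousOn_setIntegral_of_continuousOn_prod (W := fun q => u q.1 q.2 ^ p) isCompact_Icc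
    h.isOpen.measurableSet h.isBounded (h.continuousOn.rpow_const fun _ _ => Or.inr hp)

theorem integral_rpow_nonneg (h : IsDirichletSolOn m Ω T u) (ht : t ∈ Icc 0 T) :
    0 ≤ ∫ x in Ω, u t x ^ p :=
  setIntegral_nonneg h.isOpen.measurableSet fun x hx => rpow_nonneg (h.nonneg t ht x hx) _

theorem integral_rpow_pos (h : IsDirichletSolOn m Ω T u) (hΩ : Ω.Nonempty) (hp : 0 ≤ p)
    (ht : t ∈ Ioo 0 T) : 0 < ∫ x in Ω, u t x ^ p := by
  have hpos (x) (hx : x ∈ Ω) : 0 < u t x ^ p :=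
    rpow_pos_of_pos ((h.isDirichletProfile ht).pos x hx) p
  refine (setIntegral_pos_iff_support_of_nonneg_ae ?_
    (h.integrableOn_comp (continuous_rpow_const hp) (Ioo_subset_Icc_self ht))).2 ?_
  · filter_upwards [ae_restrict_mem h.isOpen.measurableSet] with x hx using (hpos x hx).le
  · rw [inter_eq_right.2 fun x hx => Function.mem_support.2 (hpos x hx).ne']
    exact h.isOpen.measure_pos volume hΩ

theorem exists_forall_mem_Icc (h : IsDirichletSolOn m Ω T u) :
    ∃ M, ∀ t ∈ Icc 0 T, ∀ x ∈ Ω, u t x ∈ Icc 0 M := by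
  obtain ⟨M, hM⟩ := (isCompact_Icc.prod h.isBounded.isCompact_closure).exists_bound_of_continuousOn
    h.continuousOn
  exact ⟨M, fun t ht x hx => ⟨h.nonneg t ht x hx,
    (le_abs_self _).trans (hM (t, x) ⟨ht, subset_closure hx⟩)⟩⟩

theorem hasDerivAt_integral_truncEntropy {ε : ℝ} {η : ℝ → ℝ} (h : IsDirichletSolOn m Ω T u)
    (hη : IsCutoff ε η) (ht : t ∈ Ioo 0 T) :
    HasDerivAt (fun τ => ∫ x in Ω, truncEntropy η p (u τ x))
      (∫ x in Ω, p * truncRpow (η ^ 2) (p - 1) (u t x) *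
        (spaceLap (fun y => u t y ^ m) x / m)) t := by
  have hderiv (s) := (hη.hasDerivAt_truncEntropy p s).deriv
  have htime := hasDerivAt_setIntegral_comp (μ := volume) (W := fun q => u q.1 q.2) isOpen_Ioo
    h.isOpen h.isBounded (h.continuousOn.mono (prod_mono_left Ioo_subset_Icc_self))
    (contDiffOn_infty.1 h.isFDESol.2.1 1) h.eq_zero hη.pos (hη.contDiff_truncEntropy p)
    (fun s hs => by rw [hderiv, hη.sq.truncRpow_eq_zero hs, mul_zero]) ht
  refine htime.congr_deriv (setIntegral_congr_fun h.isOpen.measurableSet fun x hx => ?_)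
  simp only [hderiv, h.isFDESol.2.2 (t, x) ⟨ht, hx⟩]

theorem exists_isCutoff_integral_rpow_le {a δ : ℝ} (h : IsDirichletSolOn m Ω T u)
    (hΩ : Ω.Nonempty) (hp : 1 < p) (ha : 0 < a) (hδ : 0 < δ) :
    ∃ ε η, IsCutoff ε η ∧ ∀ t ∈ Icc 0 T,
      ∫ x in Ω, truncEntropy η p (u t x) ≤ ∫ x in Ω, u t x ^ p ∧
      ∫ x in Ω, u t x ^ p ≤ (∫ x in Ω, truncEntropy η p (u t x)) + δ ∧
      ∫ x in Ω, u t x ^ p ≤ (∫ x in Ω, truncRpow η a (u t x) ^ (p / a)) + δ := by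
  have hp0 : 0 < p := by linarith
  have hr : 0 ≤ p / a := by positivity
  have hvol_top : volume Ω ≠ ⊤ := h.isBounded.measure_lt_top.ne
  have hvol : 0 < volume.real Ω := ENNReal.toReal_pos (h.isOpen.measure_pos volume hΩ).ne' hvol_top
  obtain ⟨M, hM⟩ := h.exists_forall_mem_Icc
  obtain ⟨ε, ⟨hentropy, hrpow⟩, hε⟩ :=
    ((eventually_rpow_le_truncEntropy_add (M := M) hp (div_pos hδ hvol)).and
      (eventually_rpow_mul_le_truncRpow_rpow_add (M := M) ha hr (div_pos hδ hvol))).and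
      self_mem_nhdsWithin |>.exists
  obtain ⟨η, hη⟩ := exists_isCutoff hε
  refine ⟨ε, η, hη, fun t ht => ?_⟩
  have hint := h.integrableOn_comp (continuous_rpow_const hp0.le) ht
  have hint_entropy := h.integrableOn_comp (hη.contDiff_truncEntropy p).continuous ht
  have hint_rpow := h.integrableOn_comp (F := fun s => truncRpow η a s ^ (p / a))
    ((continuous_rpow_const hr).comp (hη.contDiff_truncRpow a).continuous) ht
  refine ⟨setIntegral_mono_on hint_entropy hint h.isOpen.measurableSet fun x hx =>
    hη.truncEntropy_le_rpow hp (h.nonneg t ht x hx), ?_, ?_⟩ <;>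
    rw [← div_mul_cancel₀ δ hvol.ne']
  · exact setIntegral_le_setIntegral_add_const h.isOpen.measurableSet hvol_top hint hint_entropy
      fun x hx => hentropy η hη _ (hM t ht x hx)
  · refine setIntegral_le_setIntegral_add_const h.isOpen.measurableSet hvol_top hint hint_rpow
      fun x hx => ?_
    simpa only [mul_div_cancel₀ p ha.ne'] using hrpow η hη _ (hM t ht x hx)

theorem antitoneOn_of_forall_sub_le {K r : ℝ} (h : IsDirichletSolOn m Ω T u) (hp : 0 ≤ p)
    (hr : 0 ≤ r)
    (hle : ∀ s ∈ Ioo 0 T, ∀ t ∈ Ioo 0 T, s ≤ t →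
      (∫ x in Ω, u t x ^ p) ^ r - (∫ x in Ω, u s x ^ p) ^ r ≤ -(K * (t - s))) :
    AntitoneOn (fun t => (∫ x in Ω, u t x ^ p) ^ r + K * t) (Icc 0 T) := by
  refine antitoneOn_Icc_of_antitoneOn_Ioo
    (((h.continuousOn_integral_rpow hp).rpow_const fun _ _ => Or.inr hr).add (by fun_prop))
    fun s hs t ht hst => ?_
  linarith [hle s hs t ht hst]

end IsDirichletSolOn

theorem exists_forall_antitoneOn_integral_rpow {d : ℕ} (hd : 3 ≤ d) {m p : ℝ} (hm1 : m < 1)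
    (hm0 : m ≠ 0) (hpc : d * (1 - m) / 2 ≤ p) (hp : 1 < p) :
    ∃ κ > 0, ∀ (x₀ : EuclideanSpace ℝ (Fin d)) (ρ T : ℝ) (Ω : Set (EuclideanSpace ℝ (Fin d)))
      (u : ℝ → EuclideanSpace ℝ (Fin d) → ℝ), 0 < ρ → Ω.Nonempty → Ω ⊆ ball x₀ ρ →
      IsDirichletSolOn m Ω T u →
      AntitoneOn (fun t => (∫ x in Ω, u t x ^ p) ^ ((1 - m) / p) +
        κ * ρ ^ (-2 * (1 - d * (1 - m) / (2 * p))) * t) (Icc 0 T) := by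
  have hd3 : (3 : ℝ) ≤ d := mod_cast hd
  have ha : 0 < (p + m - 1) / 2 := by nlinarith
  have hp0 : 0 < p := by linarith
  have hexp : 0 < (1 - m) / p := div_pos (by linarith) hp0
  have hγ : (1 - m) / p = 1 - 2 * ((p + m - 1) / 2) / p := by
    field_simp
    ring
  obtain ⟨k, hk, hdiss⟩ :=
    exists_integral_mul_spaceLap_rpow_le hd hm0 hp ha (by ring) hpc
  refine ⟨(1 - m) / p * k, by positivity, fun x₀ ρ T Ω u hρ hne hΩ h =>
    h.antitoneOn_of_forall_sub_le hp0.le hexp.le fun s hs t ht hst => ?_⟩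
  have hsub : Icc s t ⊆ Ioo 0 T := Icc_subset_Ioo hs.1 ht.2
  rw [mul_assoc (_ / _) k, hγ]
  refine rpow_one_sub_sub_le_of_forall_approx hst (by positivity) (by positivity) (by linarith)
    ((h.continuousOn_integral_rpow hp0.le).mono (hsub.trans Ioo_subset_Icc_self))
    (fun τ hτ => h.integral_rpow_pos hne hp0.le (hsub hτ)) fun δ hδ => ?_
  obtain ⟨ε, η, hη, hle⟩ := h.exists_isCutoff_integral_rpow_le hne hp ha hδ
  exact ⟨_, _, _, fun τ hτ => ⟨h.hasDerivAt_integral_truncEntropy hη (hsub hτ),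
    hdiss x₀ ρ Ω (u τ) ε η hρ hΩ (h.isDirichletProfile (hsub hτ)) hη,
    hle τ (Ioo_subset_Icc_self (hsub hτ))⟩⟩

theorem Lp_decay_dirichlet_general {d : ℕ} (hd : 3 ≤ d) {m p : ℝ} (hm1 : m < 1) (hm0 : m ≠ 0)
    (hpc : d * (1 - m) / 2 ≤ p) (hp : 1 < p) :
    ∃ κ > 0, ∀ (x₀ : EuclideanSpace ℝ (Fin d)) (ρ T : ℝ) (Ω : Set (EuclideanSpace ℝ (Fin d)))
      (u : ℝ → EuclideanSpace ℝ (Fin d) → ℝ), 0 < ρ → Ω.Nonempty → Ω ⊆ ball x₀ ρ →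
      IsDirichletSolOn m Ω T u →
      (∀ s t : ℝ, 0 ≤ s → s ≤ t → t ≤ T →
        ((∫ x in Ω, u t x ^ p) ^ (1 / p)) ^ (1 - m) -
          ((∫ x in Ω, u s x ^ p) ^ (1 / p)) ^ (1 - m) ≤
        -(κ * ρ ^ (-2 * (1 - d * (1 - m) / (2 * p))) * (t - s))) ∧
      (0 ≤ T → (∀ x ∈ Ω, u T x = 0) →
        T ≤ (κ * ρ ^ (-2 * (1 - d * (1 - m) / (2 * p))))⁻¹ *
          ((∫ x in Ω, u 0 x ^ p) ^ (1 / p)) ^ (1 - m)) := by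
  obtain ⟨κ, hκ, hanti⟩ := exists_forall_antitoneOn_integral_rpow hd hm1 hm0 hpc hp
  have hp0 : 0 < p := by linarith
  refine ⟨κ, hκ, fun x₀ ρ T Ω u hρ hne hΩ h => ?_⟩
  have hnorm (t) (ht : t ∈ Icc 0 T) : ((∫ x in Ω, u t x ^ p) ^ (1 / p)) ^ (1 - m) =
      (∫ x in Ω, u t x ^ p) ^ ((1 - m) / p) := by
    rw [← rpow_mul (h.integral_rpow_nonneg ht), one_div_mul_eq_div]
  have hdecay (s t) (hs : 0 ≤ s) (hst : s ≤ t) (ht : t ≤ T) :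
      (∫ x in Ω, u t x ^ p) ^ ((1 - m) / p) - (∫ x in Ω, u s x ^ p) ^ ((1 - m) / p) ≤
        -(κ * ρ ^ (-2 * (1 - d * (1 - m) / (2 * p))) * (t - s)) := by
    have := hanti x₀ ρ T Ω u hρ hne hΩ h ⟨hs, hst.trans ht⟩ ⟨hs.trans hst, ht⟩ hst
    dsimp only at this
    linarith
  refine ⟨fun s t hs hst ht => ?_, fun hT hext => ?_⟩
  · rw [hnorm t ⟨hs.trans hst, ht⟩, hnorm s ⟨hs, hst.trans ht⟩]
    exact hdecay s t hs hst ht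
  · have hzero : ∫ x in Ω, u T x ^ p = 0 := setIntegral_eq_zero_of_forall_eq_zero fun x hx => by
      rw [hext x hx, zero_rpow hp0.ne']
    have hle := hdecay 0 T le_rfl hT le_rfl
    rw [hzero, zero_rpow (div_pos (by linarith) hp0).ne'] at hle
    rw [hnorm 0 ⟨le_rfl, hT⟩, le_inv_mul_iff₀ (by positivity)]
    linarith

/-- **Proposition 1.5: `L^p` decay and upper bound on the extinction time for the
Dirichlet problem.** Here `p_c = d(1-m)/2` and `K_p = κ (αR)^{-2(1 - p_c/p)}`. -/
theorem Lp_decay_dirichlet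
    (d : ℕ) (hd : 3 ≤ d) (m : ℝ) (hm1 : m < 1) (hm0 : m ≠ 0)
    (p : ℝ) (hp : max (d * (1 - m) / 2) 1 < p) :
    ∃ κ : ℝ, 0 < κ ∧
      ∀ (x₀ : EuclideanSpace ℝ (Fin d)) (α R T : ℝ), 1 ≤ α → 0 < R → 0 < T →
      ∀ (u : ℝ → EuclideanSpace ℝ (Fin d) → ℝ) (u₀ : EuclideanSpace ℝ (Fin d) → ℝ),
        (∀ x, 0 ≤ u₀ x) →
        (Function.support u₀ ⊆ closedBall x₀ R) →
        IntegrableOn (fun x => u₀ x ^ p) (ball x₀ (α * R)) →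
        IsDirichletSolM m x₀ (α * R) T u u₀ →
        (∀ s t : ℝ, 0 ≤ s → s ≤ t → t ≤ T →
          ((∫ x in ball x₀ (α * R), u t x ^ p) ^ (1 / p)) ^ (1 - m) -
            ((∫ x in ball x₀ (α * R), u s x ^ p) ^ (1 / p)) ^ (1 - m) ≤
          -(κ * (α * R) ^ (-2 * (1 - d * (1 - m) / (2 * p))) * (t - s))) ∧
        T ≤ (κ * (α * R) ^ (-2 * (1 - d * (1 - m) / (2 * p))))⁻¹ *
          ((∫ x in ball x₀ (α * R), u₀ x ^ p) ^ (1 / p)) ^ (1 - m) := by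
  obtain ⟨hpc, hp1⟩ := max_lt_iff.1 hp
  obtain ⟨κ, hκ, hmain⟩ := Lp_decay_dirichlet_general hd hm1 hm0 hpc.le hp1
  refine ⟨κ, hκ, fun x₀ α R T hα hR hT u u₀ _ _ _ hu => ?_⟩
  have hρ : 0 < α * R := by positivity
  have hinit : ∫ x in ball x₀ (α * R), u₀ x ^ p = ∫ x in ball x₀ (α * R), u 0 x ^ p :=
    setIntegral_congr_fun measurableSet_ball fun x hx => by simp only [hu.2.2.2.1 x hx]
  obtain ⟨hdecay, hextinction⟩ := hmain x₀ (α * R) T _ u hρ (nonempty_ball.2 hρ) subset_rfl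
    (hu.isDirichletSolOn hρ.ne')
  rw [hinit]
  exact ⟨hdecay, hextinction hT.le fun x hx => hu.2.2.2.2.2.1 x (ball_subset_closedBall hx)⟩
end

section
/- (Theorem 3.2: evolution of local L^p norms.) Let d ≥ 1, m < 1 with m ≠ 0, and let p ≥ 1 satisfy p > 1 − m. There exists a positive constant c depending only on m and d such that the following holds. Let u be a classical solution of the FDE ∂ₜu = Δ(u^m)/m on (0,T) × Ω, let x₀ ∈ Ω and 0 < R < R₀ with B_{R₀}(x₀) ⊆ Ω, and assume u(t,·) ∈ L^p(B_{R₀}(x₀)) for all 0 < t < T. Then for all 0 < s ≤ t < T: ( ∫_{B_R(x₀)} u(t,x)^p dx )^{(1−m)/p} ≤ ( ∫_{B_{R₀}(x₀)} u(s,x)^p dx )^{(1−m)/p} + K (t − s), where K = p · c · (R₀ − R)^{−2} · |B_{R₀}(x₀) \ B_R(x₀)|^{(1−m)/p}. -/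
open MeasureTheory Metric Set Real

/-!
Put `β = (1 - m) / p ∈ (0, 1)` and `Y(t) = ∫ φ u(t)^p`, where `φ` is a cutoff between the two balls.
The equation gives `Y' = p ∫ φ u^(p-1) Δ(u^m) / m`, and one integration by parts turns the integral
into `-(p - 1) ∫ φ u^(p+m-3) |∇u|² - ∫ u^(p+m-2) ∇φ·∇u`. If `m > 0`, the first term is dropped and
a second integration by parts bounds the rest by `∫ |D²φ| u^(p+m-1) / (p + m - 1)`. If `m < 0`, then
`p > 1 - m > 1` and Young's inequality absorbs the cross term into the first one, leaving
`∫ (|∇φ|² / φ) u^(p+m-1) / (4 (p - 1))`. In both cases the prefactor is at most `(1 + |m|⁻¹) / p`.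

Taking `φ = η^k` with `kβ ≥ 2` gives `|∇φ|² / φ, |D²φ| ≤ Λ φ^(1-β)`, supported in the annulus `A`,
with `Λ` of order `k² / (R₀ - R)²`. Since `p + m - 1 = p (1 - β)`, Hölder's inequality yields
`Y' ≤ C |A|^β Y^(1-β)`, which integrates to an affine bound for `Y^β`.
-/

/-! ### Directional derivatives -/

section DirectionalDerivative

variable {E : Type*} [NormedAddCommGroup E] [NormedSpace ℝ E] {e x : E} {f g : E → ℝ}

/-- The directional derivative `∂ₑf`, as a function of the base point so that it can be iterated:
`spaceLap` is the sum of `∂ₑ∂ₑ` over the standard basis. -/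
noncomputable def dirDeriv (e : E) (f : E → ℝ) (x : E) : ℝ := fderiv ℝ f x e

lemma contDiffAt_dirDeriv {n k : WithTop ℕ∞} (hf : ContDiffAt ℝ n f x) (hk : k + 1 ≤ n) :
    ContDiffAt ℝ k (dirDeriv e f) x :=
  (hf.fderiv_right hk).clm_apply contDiffAt_const

lemma contDiff_dirDeriv {n k : WithTop ℕ∞} (hf : ContDiff ℝ n f) (hk : k + 1 ≤ n) :
    ContDiff ℝ k (dirDeriv e f) :=
  (hf.fderiv_right hk).clm_apply contDiff_const

lemma continuousAt_dirDeriv (hf : ContDiffAt ℝ 1 f x) : ContinuousAt (dirDeriv e f) x :=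
  (contDiffAt_dirDeriv hf (zero_add 1).le).continuousAt

lemma continuous_dirDeriv (hf : ContDiff ℝ 1 f) : Continuous (dirDeriv e f) :=
  (contDiff_dirDeriv hf (zero_add 1).le).continuous

lemma tsupport_dirDeriv_subset : tsupport (dirDeriv e f) ⊆ tsupport f :=
  tsupport_fderiv_apply_subset ℝ e

lemma dirDeriv_eq_zero_of_notMem_tsupport (hx : x ∉ tsupport f) : dirDeriv e f x = 0 :=
  image_eq_zero_of_notMem_tsupport fun h => hx (tsupport_dirDeriv_subset h)

lemma dirDeriv_congr_of_eventuallyEq (h : f =ᶠ[nhds x] g) : dirDeriv e f x = dirDeriv e g x := by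
  rw [dirDeriv, dirDeriv, h.fderiv_eq]

lemma dirDeriv_eq_zero_of_eqOn_const {s : Set E} {c : ℝ} (hs : IsOpen s) (hf : ∀ y ∈ s, f y = c)
    (hx : x ∈ s) : dirDeriv e f x = 0 := by
  have hfc : f =ᶠ[nhds x] fun _ => c := Filter.eventually_of_mem (hs.mem_nhds hx) hf
  rw [dirDeriv_congr_of_eventuallyEq hfc]
  simp [dirDeriv]

lemma dirDeriv_comp {F : ℝ → ℝ} {F' : ℝ} (hF : HasDerivAt F F' (f x))
    (hf : DifferentiableAt ℝ f x) :
    dirDeriv e (fun y => F (f y)) x = F' * dirDeriv e f x := by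
  simpa using! DFunLike.congr_fun (hF.comp_hasFDerivAt x hf.hasFDerivAt).fderiv e

lemma dirDeriv_rpow_const (hf : DifferentiableAt ℝ f x) (hx : 0 < f x) (r : ℝ) :
    dirDeriv e (fun y => f y ^ r) x = r * f x ^ (r - 1) * dirDeriv e f x :=
  dirDeriv_comp (hasDerivAt_rpow_const (Or.inl hx.ne')) hf

lemma dirDeriv_mul (hf : DifferentiableAt ℝ f x) (hg : DifferentiableAt ℝ g x) :
    dirDeriv e (fun y => f y * g y) x = dirDeriv e f x * g x + f x * dirDeriv e g x := by
  simp only [dirDeriv, fderiv_fun_mul hf hg, add_apply, smul_apply, smul_eq_mul]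
  ring

lemma dirDeriv_dirDeriv_comp {F : ℝ → ℝ} (hF : ContDiff ℝ 2 F) (hf : ContDiff ℝ 2 f) :
    dirDeriv e (dirDeriv e fun y => F (f y)) x =
      deriv (deriv F) (f x) * dirDeriv e f x ^ 2 + deriv F (f x) * dirDeriv e (dirDeriv e f) x := by
  have hF' : ContDiff ℝ 1 (deriv F) := hF.deriv'
  have hf_diff : Differentiable ℝ f := hf.differentiable two_ne_zero
  have hdf : DifferentiableAt ℝ (dirDeriv e f) x :=
    (contDiffAt_dirDeriv hf.contDiffAt one_add_one_eq_two.le).differentiableAt one_ne_zero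
  have hchain : (dirDeriv e fun y => F (f y)) = fun y => deriv F (f y) * dirDeriv e f y :=
    funext fun y => dirDeriv_comp (hF.differentiable two_ne_zero _).hasDerivAt (hf_diff y)
  have hF'_diff : DifferentiableAt ℝ (deriv F) (f x) := hF'.differentiable one_ne_zero _
  rw [hchain, dirDeriv_mul (hF'_diff.fun_comp' x (hf_diff x)) hdf,
    dirDeriv_comp hF'_diff.hasDerivAt (hf_diff x)]
  ring

end DirectionalDerivative

section CompactSupport

variable {X : Type*} [TopologicalSpace X] {φ f : X → ℝ}

lemma continuous_mul_of_continuousAt_tsupport (hφ : Continuous φ)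
    (hf : ∀ x ∈ tsupport φ, ContinuousAt f x) : Continuous fun x => φ x * f x :=
  continuous_of_tsupport fun x hx => hφ.continuousAt.mul (hf x (tsupport_mul_subset_left hx))

lemma mul_rpow_nonneg_of_pos_tsupport {U : X → ℝ} {x : X} {p : ℝ} (hφ : 0 ≤ φ x)
    (hpos : ∀ x ∈ tsupport φ, 0 < U x) : 0 ≤ φ x * U x ^ p := by
  by_cases hx : x ∈ tsupport φ
  · exact mul_nonneg hφ (rpow_nonneg (hpos x hx).le p)
  · rw [image_eq_zero_of_notMem_tsupport hx, zero_mul]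

lemma integrable_mul_of_continuousAt_tsupport [MeasurableSpace X] [OpensMeasurableSpace X]
    {μ : Measure X} [IsFiniteMeasureOnCompacts μ] (hφ : Continuous φ) (hc : HasCompactSupport φ)
    (hf : ∀ x ∈ tsupport φ, ContinuousAt f x) : Integrable (fun x => φ x * f x) μ :=
  (continuous_mul_of_continuousAt_tsupport hφ hf).integrable_of_hasCompactSupport hc.mul_right

lemma contDiff_mul_of_contDiffAt_tsupport {E : Type*} [NormedAddCommGroup E] [NormedSpace ℝ E]
    {φ f : E → ℝ} {n : WithTop ℕ∞} (hφ : ContDiff ℝ n φ)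
    (hf : ∀ x ∈ tsupport φ, ContDiffAt ℝ n f x) : ContDiff ℝ n fun x => φ x * f x := by
  refine contDiff_iff_contDiffAt.2 fun x => ?_
  by_cases hx : x ∈ tsupport φ
  · exact hφ.contDiffAt.mul (hf x hx)
  · have hzero : (fun y => φ y * f y) =ᶠ[nhds x] fun _ => 0 := by
      filter_upwards [notMem_tsupport_iff_eventuallyEq.mp hx] with y hy
      simp [hy]
    exact contDiffAt_const.congr_of_eventuallyEq hzero

end CompactSupport

/-! ### Integration by parts against a weight -/

section WeightedIntegrals

variable {E : Type*} [NormedAddCommGroup E] [NormedSpace ℝ E] [MeasurableSpace E] {μ : Measure E}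
  {e : E} {φ U W : E → ℝ}

lemma integral_mul_rpow_mul_sq_dirDeriv_nonneg {p : ℝ} (hp : 1 ≤ p) (r : ℝ) (hφ0 : ∀ x, 0 ≤ φ x)
    (hpos : ∀ x ∈ tsupport φ, 0 < U x) :
    0 ≤ ∫ x, φ x * ((p - 1) * (U x ^ r * dirDeriv e U x ^ 2)) ∂μ := by
  refine integral_nonneg fun x => ?_
  by_cases hx : x ∈ tsupport φ
  · exact mul_nonneg (hφ0 x) (mul_nonneg (sub_nonneg.2 hp)
      (mul_nonneg (rpow_nonneg (hpos x hx).le _) (sq_nonneg _)))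
  · simp [image_eq_zero_of_notMem_tsupport hx]

variable [OpensMeasurableSpace E] [IsFiniteMeasureOnCompacts μ]

lemma integrable_mul_rpow_mul_sq_dirDeriv (a r : ℝ) (hφ : Continuous φ)
    (hc : HasCompactSupport φ) (hU : ∀ x ∈ tsupport φ, ContDiffAt ℝ 1 U x)
    (hpos : ∀ x ∈ tsupport φ, 0 < U x) :
    Integrable (fun x => φ x * (a * (U x ^ r * dirDeriv e U x ^ 2))) μ :=
  integrable_mul_of_continuousAt_tsupport hφ hc fun x hx =>
    (((hU x hx).continuousAt.rpow_const (Or.inl (hpos x hx).ne')).mul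
      ((continuousAt_dirDeriv (hU x hx)).pow 2)).const_mul _

lemma integrable_dirDeriv_mul_rpow_mul_dirDeriv (r : ℝ) (hφ : ContDiff ℝ 1 φ)
    (hc : HasCompactSupport φ) (hU : ∀ x ∈ tsupport φ, ContDiffAt ℝ 1 U x)
    (hpos : ∀ x ∈ tsupport φ, 0 < U x) :
    Integrable (fun x => dirDeriv e φ x * (U x ^ r * dirDeriv e U x)) μ :=
  integrable_mul_of_continuousAt_tsupport (continuous_dirDeriv hφ) (hc.fderiv_apply ℝ e)
    fun x hx =>
      have hUx := hU x (tsupport_dirDeriv_subset hx)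
      (hUx.continuousAt.rpow_const (Or.inl (hpos x (tsupport_dirDeriv_subset hx)).ne')).mul
        (continuousAt_dirDeriv hUx)

lemma integral_dirDeriv_dirDeriv_mul_rpow_le (r : ℝ) (hφ : ContDiff ℝ 2 φ)
    (hc : HasCompactSupport φ) (hU : ∀ x ∈ tsupport φ, ContinuousAt U x)
    (hpos : ∀ x ∈ tsupport φ, 0 < U x) (hW0 : ∀ x ∉ tsupport φ, W x = 0)
    (hW : ∀ x, dirDeriv e (dirDeriv e φ) x ≤ W x)
    (hWU : Integrable (fun x => W x * U x ^ r) μ) :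
    ∫ x, dirDeriv e (dirDeriv e φ) x * U x ^ r ∂μ ≤ ∫ x, W x * U x ^ r ∂μ := by
  have hsupp : tsupport (dirDeriv e (dirDeriv e φ)) ⊆ tsupport φ :=
    tsupport_dirDeriv_subset.trans tsupport_dirDeriv_subset
  have hddφ : Continuous (dirDeriv e (dirDeriv e φ)) :=
    continuous_dirDeriv (contDiff_dirDeriv hφ one_add_one_eq_two.le)
  have hint : Integrable (fun x => dirDeriv e (dirDeriv e φ) x * U x ^ r) μ :=
    integrable_mul_of_continuousAt_tsupport hddφ ((hc.fderiv_apply ℝ e).fderiv_apply ℝ e)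
      fun x hx => (hU x (hsupp hx)).rpow_const (Or.inl (hpos x (hsupp hx)).ne')
  refine integral_mono hint hWU fun x => ?_
  by_cases hx : x ∈ tsupport φ
  · exact mul_le_mul_of_nonneg_right (hW x) (rpow_nonneg (hpos x hx).le _)
  · simp [image_eq_zero_of_notMem_tsupport fun h => hx (hsupp h), hW0 x hx]

end WeightedIntegrals

lemma neg_mul_sq_add_mul_le_of_sq_le {a b q v w : ℝ} (hq : 0 < q) (hv : 0 ≤ v) (hw : 0 ≤ w)
    (hb : b ^ 2 ≤ v * w) : -(v * (q * a ^ 2) + b * a) ≤ w / (4 * q) := by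
  rcases hv.eq_or_lt with rfl | hv
  · have hb0 : b = 0 := by nlinarith [sq_nonneg b]
    simp only [hb0, zero_mul, add_zero, neg_zero]
    positivity
  · rw [le_div_iff₀ (by positivity)]
    refine le_of_mul_le_mul_left ?_ hv
    linarith [sq_nonneg (2 * q * v * a + b)]

lemma neg_add_rpow_le_of_sq_le {a b m p v w y : ℝ} (hy : 0 < y) (hp : 1 < p) (hv : 0 ≤ v)
    (hw : 0 ≤ w) (hb : b ^ 2 ≤ v * w) :
    -(v * ((p - 1) * (y ^ (p + m - 3) * a ^ 2)) + b * (y ^ (p + m - 2) * a)) ≤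
      1 / (4 * (p - 1)) * (w * y ^ (p + m - 1)) := by
  have hy3 : y ^ (p + m - 3) = y ^ (p + m - 1) / y ^ 2 := by
    rw [← rpow_natCast, ← rpow_sub hy]
    push_cast
    ring_nf
  have hy2 : y ^ (p + m - 2) = y ^ (p + m - 1) / y := by
    rw [← rpow_sub_one hy.ne']
    ring_nf
  calc -(v * ((p - 1) * (y ^ (p + m - 3) * a ^ 2)) + b * (y ^ (p + m - 2) * a))
      = -(v * ((p - 1) * (a / y) ^ 2) + b * (a / y)) * y ^ (p + m - 1) := by
        rw [hy3, hy2]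
        ring
    _ ≤ w / (4 * (p - 1)) * y ^ (p + m - 1) :=
        mul_le_mul_of_nonneg_right (neg_mul_sq_add_mul_le_of_sq_le (sub_pos.2 hp) hv hw hb)
          (rpow_nonneg hy.le _)
    _ = 1 / (4 * (p - 1)) * (w * y ^ (p + m - 1)) := by ring

section IntegrationByParts

variable {E : Type*} [NormedAddCommGroup E] [NormedSpace ℝ E] [FiniteDimensional ℝ E]
  [MeasurableSpace E] [BorelSpace E] {μ : Measure E} [μ.IsAddHaarMeasure]
  {e : E} {φ f g U W : E → ℝ} {m p : ℝ}

lemma integral_mul_dirDeriv (hf : ContDiff ℝ 1 f) (hc : HasCompactSupport f)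
    (hg : ∀ x ∈ tsupport f, ContDiffAt ℝ 1 g x) :
    ∫ x, f x * dirDeriv e g x ∂μ = -∫ x, dirDeriv e f x * g x ∂μ :=
  integral_mul_fderiv_eq_neg_fderiv_mul_of_integrable
    (integrable_mul_of_continuousAt_tsupport (continuous_dirDeriv hf) (hc.fderiv_apply ℝ e)
      fun x hx => (hg x (tsupport_dirDeriv_subset hx)).continuousAt)
    (integrable_mul_of_continuousAt_tsupport hf.continuous hc fun x hx =>
      continuousAt_dirDeriv (hg x hx))
    (integrable_mul_of_continuousAt_tsupport hf.continuous hc fun x hx => (hg x hx).continuousAt)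
    (fun x _ => hf.differentiable one_ne_zero x)
    (fun x hx => (hg x hx).differentiableAt one_ne_zero)

lemma integral_mul_rpow_mul_dirDeriv_dirDeriv_rpow (hm : m ≠ 0) (hφ : ContDiff ℝ 1 φ)
    (hc : HasCompactSupport φ) (hU : ∀ x ∈ tsupport φ, ContDiffAt ℝ 2 U x)
    (hpos : ∀ x ∈ tsupport φ, 0 < U x) :
    ∫ x, φ x * U x ^ (p - 1) * (dirDeriv e (dirDeriv e fun y => U y ^ m) x / m) ∂μ =
      -∫ x, (φ x * ((p - 1) * (U x ^ (p + m - 3) * dirDeriv e U x ^ 2)) +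
        dirDeriv e φ x * (U x ^ (p + m - 2) * dirDeriv e U x)) ∂μ := by
  have hU_rpow : ∀ r : ℝ, ∀ x ∈ tsupport φ, ContDiffAt ℝ 2 (fun y => U y ^ r) x :=
    fun r x hx => (hU x hx).rpow_const_of_ne (hpos x hx).ne'
  have hφU : ContDiff ℝ 1 fun x => φ x * U x ^ (p - 1) :=
    contDiff_mul_of_contDiffAt_tsupport hφ fun x hx => (hU_rpow _ x hx).of_le one_le_two
  have hibp := integral_mul_dirDeriv (μ := μ) (e := e) hφU hc.mul_right fun x hx =>
    contDiffAt_dirDeriv (e := e) (hU_rpow m x (tsupport_mul_subset_left hx)) one_add_one_eq_two.le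
  simp only [← mul_div_assoc, integral_div, hibp, neg_div]
  rw [← integral_div]
  congr 2 with x
  by_cases hx : x ∈ tsupport φ
  · have hUx := hpos x hx
    have hU_diff := (hU x hx).differentiableAt two_ne_zero
    rw [dirDeriv_mul (hφ.differentiable one_ne_zero x)
        ((hU_rpow _ x hx).differentiableAt two_ne_zero),
      dirDeriv_rpow_const hU_diff hUx, dirDeriv_rpow_const hU_diff hUx,
      show p + m - 3 = (p - 1 - 1) + (m - 1) by ring, show p + m - 2 = (p - 1) + (m - 1) by ring,
      rpow_add hUx, rpow_add hUx]
    field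
  · have hφUx : dirDeriv e (fun y => φ y * U y ^ (p - 1)) x = 0 :=
      dirDeriv_eq_zero_of_notMem_tsupport fun h => hx (tsupport_mul_subset_left h)
    rw [image_eq_zero_of_notMem_tsupport hx, dirDeriv_eq_zero_of_notMem_tsupport hx, hφUx]
    ring

lemma integral_dirDeriv_mul_rpow_mul_dirDeriv (hp : p + m - 1 ≠ 0) (hφ : ContDiff ℝ 2 φ)
    (hc : HasCompactSupport φ) (hU : ∀ x ∈ tsupport φ, ContDiffAt ℝ 1 U x)
    (hpos : ∀ x ∈ tsupport φ, 0 < U x) :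
    ∫ x, dirDeriv e φ x * (U x ^ (p + m - 2) * dirDeriv e U x) ∂μ =
      -∫ x, dirDeriv e (dirDeriv e φ) x * (U x ^ (p + m - 1) / (p + m - 1)) ∂μ := by
  have hdφ : ContDiff ℝ 1 (dirDeriv e φ) := contDiff_dirDeriv hφ one_add_one_eq_two.le
  have hibp := integral_mul_dirDeriv (μ := μ) (e := e) hdφ (hc.fderiv_apply ℝ e) fun x hx =>
    have hx' := tsupport_dirDeriv_subset hx
    (hU x hx').rpow_const_of_ne (p := p + m - 1) (hpos x hx').ne'
  simp only [← mul_div_assoc, integral_div]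
  rw [eq_comm, ← neg_div, ← hibp, ← integral_div]
  congr 1 with x
  by_cases hx : x ∈ tsupport φ
  · rw [dirDeriv_rpow_const ((hU x hx).differentiableAt one_ne_zero) (hpos x hx),
      show p + m - 2 = p + m - 1 - 1 by ring]
    field
  · simp [dirDeriv_eq_zero_of_notMem_tsupport hx]

lemma integral_mul_rpow_mul_dirDeriv_dirDeriv_rpow_le_of_dirDeriv_dirDeriv_le (hm : m ≠ 0)
    (hp : 1 ≤ p) (hpm : 0 < p + m - 1) (hφ : ContDiff ℝ 2 φ) (hc : HasCompactSupport φ)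
    (hφ0 : ∀ x, 0 ≤ φ x) (hU : ∀ x ∈ tsupport φ, ContDiffAt ℝ 2 U x)
    (hpos : ∀ x ∈ tsupport φ, 0 < U x) (hW0 : ∀ x ∉ tsupport φ, W x = 0)
    (hW : ∀ x, dirDeriv e (dirDeriv e φ) x ≤ W x)
    (hWU : Integrable (fun x => W x * U x ^ (p + m - 1)) μ) :
    ∫ x, φ x * U x ^ (p - 1) * (dirDeriv e (dirDeriv e fun y => U y ^ m) x / m) ∂μ ≤
      1 / (p + m - 1) * ∫ x, W x * U x ^ (p + m - 1) ∂μ := by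
  have hφ1 : ContDiff ℝ 1 φ := hφ.of_le one_le_two
  have hU1 : ∀ x ∈ tsupport φ, ContDiffAt ℝ 1 U x := fun x hx => (hU x hx).of_le one_le_two
  calc ∫ x, φ x * U x ^ (p - 1) * (dirDeriv e (dirDeriv e fun y => U y ^ m) x / m) ∂μ
      = -(∫ x, φ x * ((p - 1) * (U x ^ (p + m - 3) * dirDeriv e U x ^ 2)) ∂μ) +
          ∫ x, dirDeriv e (dirDeriv e φ) x * (U x ^ (p + m - 1) / (p + m - 1)) ∂μ := by
        rw [integral_mul_rpow_mul_dirDeriv_dirDeriv_rpow hm hφ1 hc hU hpos,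
          integral_add (integrable_mul_rpow_mul_sq_dirDeriv _ _ hφ.continuous hc hU1 hpos)
            (integrable_dirDeriv_mul_rpow_mul_dirDeriv _ hφ1 hc hU1 hpos),
          integral_dirDeriv_mul_rpow_mul_dirDeriv hpm.ne' hφ hc hU1 hpos]
        ring
    _ ≤ ∫ x, dirDeriv e (dirDeriv e φ) x * (U x ^ (p + m - 1) / (p + m - 1)) ∂μ :=
        add_le_of_nonpos_left <|
          neg_nonpos.2 (integral_mul_rpow_mul_sq_dirDeriv_nonneg hp _ hφ0 hpos)
    _ = 1 / (p + m - 1) * ∫ x, dirDeriv e (dirDeriv e φ) x * U x ^ (p + m - 1) ∂μ := by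
        rw [← integral_const_mul]
        congr 1 with x
        ring
    _ ≤ 1 / (p + m - 1) * ∫ x, W x * U x ^ (p + m - 1) ∂μ :=
        mul_le_mul_of_nonneg_left (integral_dirDeriv_dirDeriv_mul_rpow_le _ hφ hc
          (fun x hx => (hU x hx).continuousAt) hpos hW0 hW hWU) (by positivity)

lemma integral_mul_rpow_mul_dirDeriv_dirDeriv_rpow_le_of_sq_dirDeriv_le (hm : m ≠ 0) (hp : 1 < p)
    (hφ : ContDiff ℝ 1 φ) (hc : HasCompactSupport φ) (hφ0 : ∀ x, 0 ≤ φ x)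
    (hU : ∀ x ∈ tsupport φ, ContDiffAt ℝ 2 U x) (hpos : ∀ x ∈ tsupport φ, 0 < U x)
    (hW_nonneg : ∀ x, 0 ≤ W x) (hW0 : ∀ x ∉ tsupport φ, W x = 0)
    (hW : ∀ x, dirDeriv e φ x ^ 2 ≤ φ x * W x)
    (hWU : Integrable (fun x => W x * U x ^ (p + m - 1)) μ) :
    ∫ x, φ x * U x ^ (p - 1) * (dirDeriv e (dirDeriv e fun y => U y ^ m) x / m) ∂μ ≤
      1 / (4 * (p - 1)) * ∫ x, W x * U x ^ (p + m - 1) ∂μ := by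
  have hU1 : ∀ x ∈ tsupport φ, ContDiffAt ℝ 1 U x := fun x hx => (hU x hx).of_le one_le_two
  rw [integral_mul_rpow_mul_dirDeriv_dirDeriv_rpow hm hφ hc hU hpos, ← integral_neg,
    ← integral_const_mul]
  refine integral_mono
    ((integrable_mul_rpow_mul_sq_dirDeriv _ _ hφ.continuous hc hU1 hpos).add
      (integrable_dirDeriv_mul_rpow_mul_dirDeriv _ hφ hc hU1 hpos)).neg
    (hWU.const_mul _) fun x => ?_
  by_cases hx : x ∈ tsupport φ
  · exact neg_add_rpow_le_of_sq_le (hpos x hx) hp (hφ0 x) (hW_nonneg x) (hW x)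
  · simp [dirDeriv_eq_zero_of_notMem_tsupport hx, image_eq_zero_of_notMem_tsupport hx, hW0 x hx]

lemma integral_mul_rpow_mul_dirDeriv_dirDeriv_rpow_le (hm0 : m ≠ 0) (hp : 1 ≤ p)
    (hpm : 1 - m < p) (hφ : ContDiff ℝ 2 φ) (hc : HasCompactSupport φ) (hφ0 : ∀ x, 0 ≤ φ x)
    (hU : ∀ x ∈ tsupport φ, ContDiffAt ℝ 2 U x) (hpos : ∀ x ∈ tsupport φ, 0 < U x)
    (hW_nonneg : ∀ x, 0 ≤ W x) (hW0 : ∀ x ∉ tsupport φ, W x = 0)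
    (hW1 : ∀ x, dirDeriv e φ x ^ 2 ≤ φ x * W x) (hW2 : ∀ x, dirDeriv e (dirDeriv e φ) x ≤ W x)
    (hWU : Integrable (fun x => W x * U x ^ (p + m - 1)) μ) :
    ∫ x, φ x * U x ^ (p - 1) * (dirDeriv e (dirDeriv e fun y => U y ^ m) x / m) ∂μ ≤
      (1 + |m|⁻¹) / p * ∫ x, W x * U x ^ (p + m - 1) ∂μ := by
  have hWU_nonneg : 0 ≤ ∫ x, W x * U x ^ (p + m - 1) ∂μ := by
    refine integral_nonneg fun x => ?_
    by_cases hx : x ∈ tsupport φ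
    · exact mul_nonneg (hW_nonneg x) (rpow_nonneg (hpos x hx).le _)
    · simp [hW0 x hx]
  rcases hm0.lt_or_gt with hm_neg | hm_pos
  · have hconst : 1 / (4 * (p - 1)) ≤ (1 + |m|⁻¹) / p := by
      rw [abs_of_neg hm_neg, show 1 + (-m)⁻¹ = (1 - m) / (-m) by field,
        div_div, div_le_div_iff₀ (by linarith) (mul_pos (neg_pos.2 hm_neg) (by linarith))]
      nlinarith
    exact (integral_mul_rpow_mul_dirDeriv_dirDeriv_rpow_le_of_sq_dirDeriv_le hm0 (by linarith)
      (hφ.of_le one_le_two) hc hφ0 hU hpos hW_nonneg hW0 hW1 hWU).trans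
      (mul_le_mul_of_nonneg_right hconst hWU_nonneg)
  · have hconst : 1 / (p + m - 1) ≤ (1 + |m|⁻¹) / p := by
      rw [abs_of_pos hm_pos, show 1 + m⁻¹ = (1 + m) / m by field,
        div_div, div_le_div_iff₀ (by linarith) (by positivity)]
      nlinarith
    exact (integral_mul_rpow_mul_dirDeriv_dirDeriv_rpow_le_of_dirDeriv_dirDeriv_le hm0 hp
      (by linarith) hφ hc hφ0 hU hpos hW0 hW2 hWU).trans
      (mul_le_mul_of_nonneg_right hconst hWU_nonneg)

end IntegrationByParts

lemma spaceLap_eq_sum_dirDeriv {d : ℕ} (f : EuclideanSpace ℝ (Fin d) → ℝ)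
    (x : EuclideanSpace ℝ (Fin d)) :
    spaceLap f x = ∑ i, dirDeriv (EuclideanSpace.single i 1)
      (dirDeriv (EuclideanSpace.single i 1) f) x :=
  rfl

lemma integral_mul_rpow_mul_spaceLap_rpow_le {d : ℕ} {m p : ℝ}
    {φ U W : EuclideanSpace ℝ (Fin d) → ℝ} (hm0 : m ≠ 0) (hp : 1 ≤ p)
    (hpm : 1 - m < p) (hφ : ContDiff ℝ 2 φ) (hc : HasCompactSupport φ) (hφ0 : ∀ x, 0 ≤ φ x)
    (hU : ∀ x ∈ tsupport φ, ContDiffAt ℝ 2 U x) (hpos : ∀ x ∈ tsupport φ, 0 < U x)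
    (hW_nonneg : ∀ x, 0 ≤ W x) (hW0 : ∀ x ∉ tsupport φ, W x = 0)
    (hW1 : ∀ e x, ‖e‖ = 1 → dirDeriv e φ x ^ 2 ≤ φ x * W x)
    (hW2 : ∀ e x, ‖e‖ = 1 → dirDeriv e (dirDeriv e φ) x ≤ W x)
    (hWU : Integrable fun x => W x * U x ^ (p + m - 1)) :
    ∫ x, φ x * U x ^ (p - 1) * (spaceLap (fun y => U y ^ m) x / m) ≤
      d * ((1 + |m|⁻¹) / p) * ∫ x, W x * U x ^ (p + m - 1) := by
  have hU_rpow : ∀ r : ℝ, ∀ x ∈ tsupport φ, ContDiffAt ℝ 2 (fun y => U y ^ r) x :=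
    fun r x hx => (hU x hx).rpow_const_of_ne (hpos x hx).ne'
  have hint : ∀ e, Integrable fun x =>
      φ x * U x ^ (p - 1) * (dirDeriv e (dirDeriv e fun y => U y ^ m) x / m) := fun e => by
    simp only [mul_assoc]
    exact integrable_mul_of_continuousAt_tsupport hφ.continuous hc fun x hx =>
      (hU_rpow _ x hx).continuousAt.mul ((continuousAt_dirDeriv
        (contDiffAt_dirDeriv (hU_rpow m x hx) one_add_one_eq_two.le)).div_const m)
  simp only [spaceLap_eq_sum_dirDeriv, Finset.sum_div, Finset.mul_sum]
  rw [integral_finsetSum _ fun i _ => hint _]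
  refine (Finset.sum_le_card_nsmul _ _ _ fun i _ =>
    integral_mul_rpow_mul_dirDeriv_dirDeriv_rpow_le hm0 hp hpm hφ hc hφ0 hU hpos hW_nonneg
      hW0 (fun x => hW1 _ x ?_) (fun x => hW2 _ x ?_) hWU).trans_eq ?_
  · simp
  · simp
  · simp [mul_assoc]

section Holder

variable {α : Type*} [MeasurableSpace α] {μ : Measure α} [IsFiniteMeasure μ] {w : α → ℝ} {r : ℝ}

lemma integrable_rpow_of_le_one (hw : Integrable w μ) (hw0 : ∀ x, 0 ≤ w x) (hr0 : 0 ≤ r)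
    (hr1 : r ≤ 1) : Integrable (fun x => w x ^ r) μ := by
  refine ((integrable_const (1 : ℝ)).add hw).mono'
    (hw.aestronglyMeasurable.aemeasurable.pow_const r).aestronglyMeasurable
    (ae_of_all _ fun x => ?_)
  rw [norm_of_nonneg (rpow_nonneg (hw0 x) r), Pi.add_apply]
  rcases le_total (w x) 1 with h | h
  · exact (rpow_le_one (hw0 x) h hr0).trans (le_add_of_nonneg_right (hw0 x))
  · exact (rpow_le_self_of_one_le h hr1).trans (le_add_of_nonneg_left zero_le_one)

lemma integral_rpow_le_of_le_one (hw : Integrable w μ) (hw0 : ∀ x, 0 ≤ w x) (hr0 : 0 ≤ r)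
    (hr1 : r ≤ 1) : ∫ x, w x ^ r ∂μ ≤ μ.real univ ^ (1 - r) * (∫ x, w x ∂μ) ^ r := by
  rcases eq_or_ne μ 0 with rfl | hμ
  · simp only [integral_zero_measure]
    positivity
  have : NeZero μ := ⟨hμ⟩
  have hμ_pos : 0 < μ.real univ := measureReal_univ_pos
  have hjensen : ⨍ x, w x ^ r ∂μ ≤ (⨍ x, w x ∂μ) ^ r :=
    (concaveOn_rpow hr0 hr1).le_map_average (continuousOn_id.rpow_const fun _ _ => Or.inr hr0)
      isClosed_Ici (ae_of_all _ hw0) hw (integrable_rpow_of_le_one hw hw0 hr0 hr1)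
  rw [average_eq, average_eq, smul_eq_mul, smul_eq_mul, inv_mul_le_iff₀ hμ_pos,
    mul_rpow (by positivity) (integral_nonneg hw0), inv_rpow hμ_pos.le, ← mul_assoc] at hjensen
  rwa [rpow_sub hμ_pos, rpow_one, div_eq_mul_inv]

end Holder

/-! ### Cutoff functions -/

section Cutoff

lemma exists_bound_deriv_smoothTransition : ∃ N : ℝ, 0 < N ∧
    ∀ y, |deriv smoothTransition y| ≤ N ∧ |deriv (deriv smoothTransition) y| ≤ N := by
  have hsmooth : ContDiff ℝ 2 smoothTransition := smoothTransition.contDiff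
  have hsupp : HasCompactSupport (deriv smoothTransition) := by
    refine HasCompactSupport.intro isCompact_Icc (K := Icc 0 1) fun y hy => ?_
    rcases not_and_or.1 hy with hy | hy
    · have hzero : smoothTransition =ᶠ[nhds y] fun _ => 0 := by
        filter_upwards [Iio_mem_nhds (not_le.1 hy)] with z hz
        exact smoothTransition.zero_of_nonpos (le_of_lt hz)
      simp [hzero.deriv_eq]
    · have hone : smoothTransition =ᶠ[nhds y] fun _ => 1 := by
        filter_upwards [Ioi_mem_nhds (not_le.1 hy)] with z hz
        exact smoothTransition.one_of_one_le (le_of_lt hz)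
      simp [hone.deriv_eq]
  have hderiv : ContDiff ℝ 1 (deriv smoothTransition) := hsmooth.deriv'
  obtain ⟨A, hA⟩ := hsupp.exists_bound_of_continuous hderiv.continuous
  obtain ⟨B, hB⟩ := hsupp.deriv.exists_bound_of_continuous (hderiv.continuous_deriv le_rfl)
  exact ⟨max 1 (max A B), by positivity, fun y =>
    ⟨(hA y).trans (by simp), (hB y).trans (by simp)⟩⟩

lemma pow_le_pow_rpow {y θ : ℝ} {j k : ℕ} (hy0 : 0 ≤ y) (hy1 : y ≤ 1) (hθ : 0 ≤ θ)
    (hj : k * θ ≤ j) : y ^ j ≤ (y ^ k) ^ θ := by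
  rw [← rpow_natCast, ← rpow_natCast, ← rpow_mul hy0]
  exact rpow_le_rpow_of_exponent_ge' hy0 hy1 (by positivity) hj

section SmoothTransitionPow

variable {N : ℝ} {k : ℕ} {y : ℝ}

lemma deriv_smoothTransition_pow : deriv (fun y => smoothTransition y ^ k) =
    fun y => k * (smoothTransition y ^ (k - 1) * deriv smoothTransition y) := by
  funext y
  rw [((smoothTransition.contDiff.differentiable one_ne_zero y).hasDerivAt.fun_pow k).deriv,
    mul_assoc]

lemma deriv_deriv_smoothTransition_pow : deriv (deriv fun y => smoothTransition y ^ k) y =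
      k * ((k - 1 : ℕ) * smoothTransition y ^ (k - 2) * deriv smoothTransition y ^ 2 +
        smoothTransition y ^ (k - 1) * deriv (deriv smoothTransition) y) := by
  have hsmooth : ContDiff ℝ 2 smoothTransition := smoothTransition.contDiff
  have hS := (hsmooth.differentiable two_ne_zero y).hasDerivAt
  have hS' := (hsmooth.deriv'.differentiable one_ne_zero y).hasDerivAt
  rw [deriv_smoothTransition_pow, deriv_const_mul_field, ((hS.fun_pow (k - 1)).fun_mul hS').deriv,
    Nat.sub_sub]
  ring

lemma sq_deriv_smoothTransition_pow_le (hN : |deriv smoothTransition y| ≤ N) :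
    deriv (fun y => smoothTransition y ^ k) y ^ 2 ≤
      (k * N) ^ 2 * (smoothTransition y ^ (k - 1)) ^ 2 := by
  have hsq : deriv smoothTransition y ^ 2 ≤ N ^ 2 :=
    sq_le_sq' (neg_le_of_abs_le hN) (le_of_abs_le hN)
  calc deriv (fun y => smoothTransition y ^ k) y ^ 2
      = (k * smoothTransition y ^ (k - 1)) ^ 2 * deriv smoothTransition y ^ 2 := by
        rw [deriv_smoothTransition_pow]
        ring
    _ ≤ (k * smoothTransition y ^ (k - 1)) ^ 2 * N ^ 2 := by gcongr
    _ = (k * N) ^ 2 * (smoothTransition y ^ (k - 1)) ^ 2 := by ring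

lemma abs_deriv_smoothTransition_pow_le (hN : |deriv smoothTransition y| ≤ N) :
    |deriv (fun y => smoothTransition y ^ k) y| ≤ k * N * smoothTransition y ^ (k - 2) := by
  have hS0 := smoothTransition.nonneg y
  have hpow : smoothTransition y ^ (k - 1) ≤ smoothTransition y ^ (k - 2) :=
    pow_le_pow_of_le_one hS0 (smoothTransition.le_one y) (by omega)
  rw [deriv_smoothTransition_pow, abs_mul, abs_mul, Nat.abs_cast, abs_of_nonneg (by positivity),
    mul_assoc, mul_comm N]
  gcongr

lemma abs_deriv_deriv_smoothTransition_pow_le (hN1 : |deriv smoothTransition y| ≤ N)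
    (hN2 : |deriv (deriv smoothTransition) y| ≤ N) :
    |deriv (deriv fun y => smoothTransition y ^ k) y| ≤
      k * (k * N ^ 2 + N) * smoothTransition y ^ (k - 2) := by
  have hS0 := smoothTransition.nonneg y
  have hS1 := smoothTransition.le_one y
  rw [deriv_deriv_smoothTransition_pow, abs_mul, Nat.abs_cast, mul_assoc (k : ℝ)]
  refine mul_le_mul_of_nonneg_left ?_ k.cast_nonneg
  calc |(k - 1 : ℕ) * smoothTransition y ^ (k - 2) * deriv smoothTransition y ^ 2 +
          smoothTransition y ^ (k - 1) * deriv (deriv smoothTransition) y|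
      ≤ (k - 1 : ℕ) * smoothTransition y ^ (k - 2) * |deriv smoothTransition y| ^ 2 +
          smoothTransition y ^ (k - 1) * |deriv (deriv smoothTransition) y| := by
        refine (abs_add_le _ _).trans_eq ?_
        simp only [abs_mul, abs_pow, Nat.abs_cast, abs_of_nonneg hS0]
    _ ≤ k * smoothTransition y ^ (k - 2) * N ^ 2 + smoothTransition y ^ (k - 2) * N := by
        gcongr ?_ * _ * ?_ ^ 2 + ?_ * ?_
        · exact_mod_cast Nat.sub_le k 1
        · exact pow_le_pow_of_le_one hS0 hS1 (by omega)
    _ = (k * N ^ 2 + N) * smoothTransition y ^ (k - 2) := by ring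

end SmoothTransitionPow

/-- A transition from `0` on `(-∞, 0]` to `1` on `[1, ∞)` whose derivatives are controlled by
powers of `η` itself, with an exponent deficit `β`. -/
structure IsTransitionProfile (η : ℝ → ℝ) (β Λ : ℝ) : Prop where
  contDiff : ContDiff ℝ 2 η
  nonneg : ∀ y, 0 ≤ η y
  le_one : ∀ y, η y ≤ 1
  eq_zero_of_nonpos : ∀ y ≤ 0, η y = 0
  eq_one_of_one_le : ∀ y, 1 ≤ y → η y = 1
  sq_deriv_le : ∀ y, deriv η y ^ 2 ≤ Λ * η y ^ (2 - β)
  abs_deriv_le : ∀ y, |deriv η y| ≤ Λ * η y ^ (1 - β)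
  abs_deriv_deriv_le : ∀ y, |deriv (deriv η) y| ≤ Λ * η y ^ (1 - β)

variable {η : ℝ → ℝ} {β Λ y : ℝ}

lemma IsTransitionProfile.mono {Λ' : ℝ} (h : IsTransitionProfile η β Λ)
    (hΛ : Λ ≤ Λ') : IsTransitionProfile η β Λ' where
  __ := h
  sq_deriv_le y := (h.sq_deriv_le y).trans (by gcongr; exact rpow_nonneg (h.nonneg y) _)
  abs_deriv_le y := (h.abs_deriv_le y).trans (by gcongr; exact rpow_nonneg (h.nonneg y) _)
  abs_deriv_deriv_le y :=
    (h.abs_deriv_deriv_le y).trans (by gcongr; exact rpow_nonneg (h.nonneg y) _)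

lemma IsTransitionProfile.const_nonneg (h : IsTransitionProfile η β Λ) : 0 ≤ Λ := by
  simpa [h.eq_one_of_one_le 1 le_rfl] using (abs_nonneg _).trans (h.abs_deriv_le 1)

lemma IsTransitionProfile.deriv_eq_zero_of_nonpos (h : IsTransitionProfile η β Λ) (hβ : β < 1)
    (hy : y ≤ 0) : deriv η y = 0 := by
  simpa [h.eq_zero_of_nonpos y hy, zero_rpow (sub_pos.2 hβ).ne'] using h.abs_deriv_le y

lemma IsTransitionProfile.deriv_deriv_eq_zero_of_nonpos (h : IsTransitionProfile η β Λ)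
    (hβ : β < 1) (hy : y ≤ 0) : deriv (deriv η) y = 0 := by
  simpa [h.eq_zero_of_nonpos y hy, zero_rpow (sub_pos.2 hβ).ne'] using h.abs_deriv_deriv_le y

lemma isTransitionProfile_smoothTransition_pow {N : ℝ} {k : ℕ} (hβ1 : β ≤ 1) (hk : 2 ≤ k * β)
    (hN : ∀ y, |deriv smoothTransition y| ≤ N ∧ |deriv (deriv smoothTransition) y| ≤ N) :
    IsTransitionProfile (fun y => smoothTransition y ^ k) β (k ^ 2 * (N ^ 2 + N)) := by
  have hk2 : 2 ≤ k := by
    exact_mod_cast hk.trans (mul_le_of_le_one_right (Nat.cast_nonneg k) hβ1)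
  have hk1 : (1 : ℝ) ≤ k := by exact_mod_cast one_le_two.trans hk2
  have hN0 : 0 ≤ N := (abs_nonneg _).trans (hN 0).1
  have hkN : k * N ≤ k ^ 2 * N := by
    gcongr
    exact le_self_pow₀ hk1 two_ne_zero
  have hS0 := smoothTransition.nonneg
  have hS1 := smoothTransition.le_one
  have hSβ : ∀ y, smoothTransition y ^ (k - 2) ≤ (smoothTransition y ^ k) ^ (1 - β) := fun y =>
    pow_le_pow_rpow (hS0 y) (hS1 y) (by linarith) (by push_cast [hk2]; linarith)
  have hSβ' : ∀ y, (smoothTransition y ^ (k - 1)) ^ 2 ≤ (smoothTransition y ^ k) ^ (2 - β) := by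
    intro y
    rw [← pow_mul]
    exact pow_le_pow_rpow (hS0 y) (hS1 y) (by linarith)
      (by push_cast [one_le_two.trans hk2]; linarith)
  refine ⟨smoothTransition.contDiff.pow k, fun y => pow_nonneg (hS0 y) k,
    fun y => pow_le_one₀ (hS0 y) (hS1 y), fun y hy => ?_, fun y hy => ?_, fun y => ?_, fun y => ?_,
    fun y => ?_⟩
  · rw [smoothTransition.zero_of_nonpos hy, zero_pow (by omega)]
  · rw [smoothTransition.one_of_one_le hy, one_pow]
  · refine (sq_deriv_smoothTransition_pow_le (hN y).1).trans
      (mul_le_mul ?_ (hSβ' y) (by positivity) (by positivity))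
    rw [mul_pow]
    gcongr
    linarith
  · refine (abs_deriv_smoothTransition_pow_le (hN y).1).trans
      (mul_le_mul ?_ (hSβ y) (pow_nonneg (hS0 y) _) (by positivity))
    linarith [mul_nonneg (sq_nonneg (k : ℝ)) (sq_nonneg N)]
  · refine (abs_deriv_deriv_smoothTransition_pow_le (hN y).1 (hN y).2).trans
      (mul_le_mul ?_ (hSβ y) (pow_nonneg (hS0 y) _) (by positivity))
    linarith

lemma exists_isTransitionProfile : ∃ M : ℝ, 0 < M ∧ ∀ β : ℝ, 0 < β → β ≤ 1 →
    ∃ η : ℝ → ℝ, IsTransitionProfile η β (M / β ^ 2) := by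
  obtain ⟨N, hN_pos, hN⟩ := exists_bound_deriv_smoothTransition
  refine ⟨9 * (N ^ 2 + N), by positivity, fun β hβ0 hβ1 => ?_⟩
  have hk : 2 ≤ ⌈2 / β⌉₊ * β := (div_le_iff₀ hβ0).1 (Nat.le_ceil _)
  have hk3 : ⌈2 / β⌉₊ * β ≤ 3 := by
    have := (Nat.ceil_lt_add_one (div_pos two_pos hβ0).le).le
    calc ⌈2 / β⌉₊ * β ≤ (2 / β + 1) * β := by gcongr
      _ = 2 + β := by field
      _ ≤ 3 := by linarith
  refine ⟨_, (isTransitionProfile_smoothTransition_pow hβ1 hk hN).mono ?_⟩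
  rw [le_div_iff₀ (by positivity)]
  calc (⌈2 / β⌉₊ : ℝ) ^ 2 * (N ^ 2 + N) * β ^ 2 = (⌈2 / β⌉₊ * β) ^ 2 * (N ^ 2 + N) := by ring
    _ ≤ 3 ^ 2 * (N ^ 2 + N) := by gcongr
    _ = 9 * (N ^ 2 + N) := by norm_num

section SpatialCutoff

variable {E : Type*} [NormedAddCommGroup E] {x₀ x e : E} {r ρ R₀ β Λ : ℝ} {η : ℝ → ℝ}

/-- A cutoff function between concentric balls whose first and second derivatives in unit
directions are controlled by powers of `φ` itself, with an exponent deficit `β`. -/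
structure IsCutoff_s10 [NormedSpace ℝ E] (φ : E → ℝ) (x₀ : E) (R R₀ β Λ : ℝ) : Prop where
  contDiff : ContDiff ℝ 2 φ
  hasCompactSupport : HasCompactSupport φ
  tsupport_subset : tsupport φ ⊆ ball x₀ R₀
  nonneg : ∀ x, 0 ≤ φ x
  le_one : ∀ x, φ x ≤ 1
  eq_one : ∀ x ∈ ball x₀ R, φ x = 1
  sq_dirDeriv_le : ∀ e x, ‖e‖ = 1 → dirDeriv e φ x ^ 2 ≤ Λ * φ x ^ (2 - β)
  dirDeriv_dirDeriv_le : ∀ e x, ‖e‖ = 1 → dirDeriv e (dirDeriv e φ) x ≤ Λ * φ x ^ (1 - β)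

/-- A radial function decreasing from `1` on the sphere of radius `r` around `x₀` to `0` on the
sphere of radius `ρ`. It is quadratic in `x`, hence smooth also at `x₀`. -/
noncomputable def quadraticRamp (x₀ : E) (r ρ : ℝ) (x : E) : ℝ :=
  (ρ ^ 2 - ‖x - x₀‖ ^ 2) / (ρ ^ 2 - r ^ 2)

lemma quadraticRamp_nonpos (hr : 0 < r) (hρ : r < ρ) (hx : ρ ≤ ‖x - x₀‖) :
    quadraticRamp x₀ r ρ x ≤ 0 :=
  div_nonpos_of_nonpos_of_nonneg (by nlinarith) (by nlinarith)

lemma one_le_quadraticRamp (hr : 0 < r) (hρ : r < ρ) (hx : ‖x - x₀‖ ≤ r) :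
    1 ≤ quadraticRamp x₀ r ρ x := by
  rw [quadraticRamp, one_le_div (by nlinarith)]
  gcongr

variable [InnerProductSpace ℝ E]

lemma contDiff_quadraticRamp {n : WithTop ℕ∞} : ContDiff ℝ n (quadraticRamp x₀ r ρ) :=
  (contDiff_const.sub ((contDiff_id.sub contDiff_const).norm_sq ℝ)).div_const _

lemma dirDeriv_quadraticRamp : dirDeriv e (quadraticRamp x₀ r ρ) =
    fun x => -2 * inner ℝ (x - x₀) e / (ρ ^ 2 - r ^ 2) := by
  funext x
  have hderiv : HasFDerivAt (quadraticRamp x₀ r ρ) _ x :=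
    (((hasFDerivAt_id x).sub_const x₀).norm_sq.const_sub (ρ ^ 2)).mul_const (ρ ^ 2 - r ^ 2)⁻¹
  rw [dirDeriv, hderiv.fderiv]
  simp only [id_eq, map_sub, ContinuousLinearMap.comp_id, smul_neg, neg_apply, smul_apply,
    sub_apply, coe_innerSL_apply, nsmul_eq_mul, Nat.cast_ofNat, smul_eq_mul, inner_sub_left]
  ring

lemma dirDeriv_dirDeriv_quadraticRamp : dirDeriv e (dirDeriv e (quadraticRamp x₀ r ρ)) x =
    -2 * ‖e‖ ^ 2 / (ρ ^ 2 - r ^ 2) := by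
  have hderiv : HasFDerivAt (fun x => -2 * inner ℝ (x - x₀) e / (ρ ^ 2 - r ^ 2)) _ x :=
    ((((hasFDerivAt_id x).sub_const x₀).inner ℝ (hasFDerivAt_const e x)).const_mul (-2)).mul_const
      (ρ ^ 2 - r ^ 2)⁻¹
  rw [dirDeriv_quadraticRamp, dirDeriv, hderiv.fderiv]
  simp only [id_eq, neg_smul, smul_neg, neg_apply, smul_apply, ContinuousLinearMap.comp_apply,
    ContinuousLinearMap.prod_apply, ContinuousLinearMap.id_apply, zero_apply, fderivInnerCLM_apply,
    inner_zero_right, real_inner_self_eq_norm_sq, zero_add, smul_eq_mul]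
  ring

lemma abs_dirDeriv_quadraticRamp_le (hr : 0 < r) (hρ : r < ρ) (he : ‖e‖ = 1)
    (hx : ‖x - x₀‖ ≤ ρ) : |dirDeriv e (quadraticRamp x₀ r ρ) x| ≤ 2 / (ρ - r) := by
  have hinner : |inner ℝ (x - x₀) e| ≤ ρ := by
    simpa [he] using (abs_real_inner_le_norm (x - x₀) e).trans (by rwa [he, mul_one])
  have hsq : 0 < ρ ^ 2 - r ^ 2 := by nlinarith
  rw [dirDeriv_quadraticRamp, abs_div, abs_mul, abs_of_pos hsq, abs_neg, abs_two,
    div_le_div_iff₀ hsq (by linarith)]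
  calc 2 * |inner ℝ (x - x₀) e| * (ρ - r) ≤ 2 * (ρ + r) * (ρ - r) := by
        gcongr
        linarith
    _ = 2 * (ρ ^ 2 - r ^ 2) := by ring

lemma abs_dirDeriv_dirDeriv_quadraticRamp_le (hr : 0 < r) (hρ : r < ρ) (he : ‖e‖ = 1) :
    |dirDeriv e (dirDeriv e (quadraticRamp x₀ r ρ)) x| ≤ 2 / (ρ - r) ^ 2 := by
  have hsq : 0 < ρ ^ 2 - r ^ 2 := by nlinarith
  rw [dirDeriv_dirDeriv_quadraticRamp, he, one_pow, mul_one, abs_div, abs_neg, abs_two,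
    abs_of_pos hsq]
  have := sub_pos.2 hρ
  gcongr 2 / ?_
  nlinarith

lemma IsTransitionProfile.sq_dirDeriv_comp_quadraticRamp_le (hη : IsTransitionProfile η β Λ)
    (hβ : β < 1) (hr : 0 < r) (hρ : r < ρ) (he : ‖e‖ = 1) :
    dirDeriv e (fun y => η (quadraticRamp x₀ r ρ y)) x ^ 2 ≤
      4 * Λ / (ρ - r) ^ 2 * η (quadraticRamp x₀ r ρ x) ^ (2 - β) := by
  have hΛ := hη.const_nonneg
  have hη0 := rpow_nonneg (hη.nonneg (quadraticRamp x₀ r ρ x)) (2 - β)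
  rw [dirDeriv_comp (hη.contDiff.differentiable two_ne_zero _).hasDerivAt
    (contDiff_quadraticRamp.differentiable one_ne_zero x), mul_pow]
  rcases le_total ‖x - x₀‖ ρ with hx | hx
  · have hramp := abs_dirDeriv_quadraticRamp_le hr hρ he hx
    calc deriv η (quadraticRamp x₀ r ρ x) ^ 2 * dirDeriv e (quadraticRamp x₀ r ρ) x ^ 2
        ≤ (Λ * η (quadraticRamp x₀ r ρ x) ^ (2 - β)) * (2 / (ρ - r)) ^ 2 :=
          mul_le_mul (hη.sq_deriv_le _)
            (sq_le_sq' (neg_le_of_abs_le hramp) (le_of_abs_le hramp)) (sq_nonneg _) (by positivity)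
      _ = 4 * Λ / (ρ - r) ^ 2 * η (quadraticRamp x₀ r ρ x) ^ (2 - β) := by
          rw [div_pow]
          ring
  · rw [hη.deriv_eq_zero_of_nonpos hβ (quadraticRamp_nonpos hr hρ hx)]
    simp only [ne_eq, two_ne_zero, not_false_eq_true, zero_pow, zero_mul]
    positivity

lemma IsTransitionProfile.dirDeriv_dirDeriv_comp_quadraticRamp_le
    (hη : IsTransitionProfile η β Λ) (hβ : β < 1) (hr : 0 < r) (hρ : r < ρ) (he : ‖e‖ = 1) :
    dirDeriv e (dirDeriv e fun y => η (quadraticRamp x₀ r ρ y)) x ≤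
      6 * Λ / (ρ - r) ^ 2 * η (quadraticRamp x₀ r ρ x) ^ (1 - β) := by
  have hΛ := hη.const_nonneg
  have hη0 := rpow_nonneg (hη.nonneg (quadraticRamp x₀ r ρ x)) (1 - β)
  rw [dirDeriv_dirDeriv_comp hη.contDiff contDiff_quadraticRamp]
  rcases le_total ‖x - x₀‖ ρ with hx | hx
  · have hramp := abs_dirDeriv_quadraticRamp_le hr hρ he hx
    have hterm1 : deriv (deriv η) (quadraticRamp x₀ r ρ x) *
        dirDeriv e (quadraticRamp x₀ r ρ) x ^ 2 ≤
        Λ * η (quadraticRamp x₀ r ρ x) ^ (1 - β) * (2 / (ρ - r)) ^ 2 :=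
      mul_le_mul (le_of_abs_le (hη.abs_deriv_deriv_le _))
        (sq_le_sq' (neg_le_of_abs_le hramp) (le_of_abs_le hramp)) (sq_nonneg _) (by positivity)
    have hterm2 : deriv η (quadraticRamp x₀ r ρ x) *
        dirDeriv e (dirDeriv e (quadraticRamp x₀ r ρ)) x ≤
        Λ * η (quadraticRamp x₀ r ρ x) ^ (1 - β) * (2 / (ρ - r) ^ 2) := by
      refine (le_abs_self _).trans ?_
      rw [abs_mul]
      exact mul_le_mul (hη.abs_deriv_le _) (abs_dirDeriv_dirDeriv_quadraticRamp_le hr hρ he)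
        (abs_nonneg _) (by positivity)
    exact (add_le_add hterm1 hterm2).trans_eq (by rw [div_pow]; ring)
  · have hq := quadraticRamp_nonpos hr hρ hx
    rw [hη.deriv_eq_zero_of_nonpos hβ hq, hη.deriv_deriv_eq_zero_of_nonpos hβ hq]
    simp only [zero_mul, add_zero]
    positivity

lemma IsTransitionProfile.isCutoff_comp_quadraticRamp [ProperSpace E]
    (hη : IsTransitionProfile η β Λ) (hβ : β < 1) (hr : 0 < r) (hρ : r < ρ) (hR₀ : ρ < R₀) :
    IsCutoff_s10 (fun x => η (quadraticRamp x₀ r ρ x)) x₀ r R₀ β (6 * Λ / (ρ - r) ^ 2) := by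
  have hΛ := hη.const_nonneg
  have hsupp : Function.support (fun x => η (quadraticRamp x₀ r ρ x)) ⊆ closedBall x₀ ρ := by
    refine Function.support_subset_iff'.2 fun x hx => ?_
    rw [mem_closedBall_iff_norm, not_le] at hx
    exact hη.eq_zero_of_nonpos _ (quadraticRamp_nonpos hr hρ hx.le)
  exact
    { contDiff := hη.contDiff.comp contDiff_quadraticRamp
      hasCompactSupport := .of_support_subset_isCompact (isCompact_closedBall x₀ ρ) hsupp
      tsupport_subset := (closure_minimal hsupp isClosed_closedBall).trans
        (closedBall_subset_ball hR₀)
      nonneg := fun x => hη.nonneg _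
      le_one := fun x => hη.le_one _
      eq_one := fun x hx => hη.eq_one_of_one_le _
        (one_le_quadraticRamp hr hρ (mem_ball_iff_norm.1 hx).le)
      sq_dirDeriv_le := fun e x he => by
        refine (hη.sq_dirDeriv_comp_quadraticRamp_le hβ hr hρ he).trans ?_
        gcongr ?_ * Λ / _ * _
        · exact rpow_nonneg (hη.nonneg _) _
        · norm_num
      dirDeriv_dirDeriv_le := fun e x he =>
        hη.dirDeriv_dirDeriv_comp_quadraticRamp_le hβ hr hρ he }

lemma exists_isCutoff_s10 : ∃ M : ℝ, 0 < M ∧ ∀ {E : Type*} [NormedAddCommGroup E]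
    [InnerProductSpace ℝ E] [ProperSpace E] (x₀ : E) {R R₀ β : ℝ}, 0 < R → R < R₀ → 0 < β →
    β < 1 → ∃ φ : E → ℝ, IsCutoff_s10 φ x₀ R R₀ β (M / (β * (R₀ - R)) ^ 2) := by
  obtain ⟨M, hM, hprofile⟩ := exists_isTransitionProfile
  refine ⟨24 * M, by positivity, fun x₀ R R₀ β hR hR₀ hβ0 hβ1 => ?_⟩
  obtain ⟨η, hη⟩ := hprofile β hβ0 hβ1.le
  have hcutoff := hη.isCutoff_comp_quadraticRamp (x₀ := x₀) (ρ := (R + R₀) / 2) (R₀ := R₀) hβ1 hR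
    (by linarith) (by linarith)
  refine ⟨fun x => η (quadraticRamp x₀ R ((R + R₀) / 2) x), ?_⟩
  convert hcutoff using 1
  rw [show (R + R₀) / 2 - R = (R₀ - R) / 2 by ring]
  field

end SpatialCutoff

end Cutoff

/-! ### The spatial estimate -/

section AnnulusWeight

variable {E : Type*} [NormedAddCommGroup E] {φ U : E → ℝ} {x₀ x e : E} {R R₀ β Λ p : ℝ}

lemma isFiniteMeasure_restrict_annulus [MeasurableSpace E] {μ : Measure E}
    [IsFiniteMeasureOnCompacts μ] [ProperSpace E] :
    IsFiniteMeasure (μ.restrict (ball x₀ R₀ \ ball x₀ R)) :=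
  isFiniteMeasure_restrict.2 (measure_ball_lt_top.trans_le' (measure_mono sdiff_subset)).ne

/-- The weight dominating the derivatives of a cutoff `φ`. It is supported in the annulus, because
`φ` is constant on the inner ball. -/
noncomputable def annulusWeight (φ : E → ℝ) (x₀ : E) (R R₀ β Λ : ℝ) : E → ℝ :=
  (ball x₀ R₀ \ ball x₀ R).indicator fun x => Λ * φ x ^ (1 - β)

lemma annulusWeight_eq_zero_of_notMem_tsupport (hβ : β < 1) (hx : x ∉ tsupport φ) :
    annulusWeight φ x₀ R R₀ β Λ x = 0 := by
  refine indicator_apply_eq_zero.2 fun _ => ?_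
  rw [image_eq_zero_of_notMem_tsupport hx, zero_rpow (sub_pos.2 hβ).ne', mul_zero]

lemma annulusWeight_of_mem_of_notMem (hx₀ : x ∈ ball x₀ R₀) (hx : x ∉ ball x₀ R) :
    annulusWeight φ x₀ R R₀ β Λ x = Λ * φ x ^ (1 - β) :=
  indicator_of_mem (mem_sdiff_of_mem hx₀ hx) _

variable [NormedSpace ℝ E]

lemma IsCutoff_s10.annulusWeight_nonneg (hφ : IsCutoff_s10 φ x₀ R R₀ β Λ) (hΛ : 0 ≤ Λ) :
    0 ≤ annulusWeight φ x₀ R R₀ β Λ x :=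
  indicator_nonneg (fun y _ => mul_nonneg hΛ (rpow_nonneg (hφ.nonneg y) _)) x

lemma IsCutoff_s10.dirDeriv_eq_zero (hφ : IsCutoff_s10 φ x₀ R R₀ β Λ) (hx : x ∈ ball x₀ R) :
    dirDeriv e φ x = 0 :=
  dirDeriv_eq_zero_of_eqOn_const isOpen_ball hφ.eq_one hx

lemma IsCutoff_s10.sq_dirDeriv_le_mul_annulusWeight (hφ : IsCutoff_s10 φ x₀ R R₀ β Λ) (hΛ : 0 ≤ Λ)
    (hβ : β < 1) (he : ‖e‖ = 1) :
    dirDeriv e φ x ^ 2 ≤ φ x * annulusWeight φ x₀ R R₀ β Λ x := by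
  have hzero : dirDeriv e φ x = 0 →
      dirDeriv e φ x ^ 2 ≤ φ x * annulusWeight φ x₀ R R₀ β Λ x := fun h => by
    rw [h, sq, zero_mul]
    exact mul_nonneg (hφ.nonneg x) (hφ.annulusWeight_nonneg hΛ)
  by_cases hxR : x ∈ ball x₀ R
  · exact hzero (hφ.dirDeriv_eq_zero hxR)
  by_cases hxR₀ : x ∈ ball x₀ R₀
  · refine (hφ.sq_dirDeriv_le e x he).trans_eq ?_
    rw [annulusWeight_of_mem_of_notMem hxR₀ hxR, show 2 - β = 1 + (1 - β) by ring,
      rpow_one_add' (hφ.nonneg x) (by linarith)]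
    ring
  · exact hzero (dirDeriv_eq_zero_of_notMem_tsupport fun h => hxR₀ (hφ.tsupport_subset h))

lemma IsCutoff_s10.dirDeriv_dirDeriv_le_annulusWeight (hφ : IsCutoff_s10 φ x₀ R R₀ β Λ) (hΛ : 0 ≤ Λ)
    (he : ‖e‖ = 1) :
    dirDeriv e (dirDeriv e φ) x ≤ annulusWeight φ x₀ R R₀ β Λ x := by
  by_cases hxR : x ∈ ball x₀ R
  · rw [dirDeriv_eq_zero_of_eqOn_const isOpen_ball (fun y hy => hφ.dirDeriv_eq_zero hy) hxR]
    exact hφ.annulusWeight_nonneg hΛ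
  by_cases hxR₀ : x ∈ ball x₀ R₀
  · rw [annulusWeight_of_mem_of_notMem hxR₀ hxR]
    exact hφ.dirDeriv_dirDeriv_le e x he
  · rw [dirDeriv_eq_zero_of_notMem_tsupport fun h =>
      hxR₀ (hφ.tsupport_subset (tsupport_dirDeriv_subset h))]
    exact hφ.annulusWeight_nonneg hΛ

lemma IsCutoff_s10.annulusWeight_mul_rpow (hφ : IsCutoff_s10 φ x₀ R R₀ β Λ) (hβ : β < 1)
    (hpos : ∀ x ∈ tsupport φ, 0 < U x) :
    (fun x => annulusWeight φ x₀ R R₀ β Λ x * U x ^ (p * (1 - β))) =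
      (ball x₀ R₀ \ ball x₀ R).indicator fun x => Λ * (φ x * U x ^ p) ^ (1 - β) := by
  funext x
  rw [annulusWeight, ← indicator_mul_left _ _ fun x => U x ^ (p * (1 - β))]
  congr 1
  funext x
  by_cases hx : x ∈ tsupport φ
  · have hUx := (hpos x hx).le
    rw [mul_rpow (hφ.nonneg x) (rpow_nonneg hUx p), rpow_mul hUx, mul_assoc]
  · simp [image_eq_zero_of_notMem_tsupport hx, zero_rpow (sub_pos.2 hβ).ne']

variable [MeasurableSpace E] [OpensMeasurableSpace E] {μ : Measure E} [IsFiniteMeasureOnCompacts μ]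

lemma IsCutoff_s10.integrable_mul_rpow (hφ : IsCutoff_s10 φ x₀ R R₀ β Λ)
    (hU : ∀ x ∈ tsupport φ, ContinuousAt U x) (hpos : ∀ x ∈ tsupport φ, 0 < U x) :
    Integrable (fun x => φ x * U x ^ p) μ :=
  integrable_mul_of_continuousAt_tsupport hφ.contDiff.continuous hφ.hasCompactSupport
    fun x hx => (hU x hx).rpow_const (Or.inl (hpos x hx).ne')

variable [ProperSpace E]

lemma IsCutoff_s10.integrable_annulusWeight_mul_rpow (hφ : IsCutoff_s10 φ x₀ R R₀ β Λ) (hβ0 : 0 ≤ β)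
    (hβ1 : β < 1) (hU : ∀ x ∈ tsupport φ, ContinuousAt U x) (hpos : ∀ x ∈ tsupport φ, 0 < U x) :
    Integrable (fun x => annulusWeight φ x₀ R R₀ β Λ x * U x ^ (p * (1 - β))) μ := by
  have hA : MeasurableSet (ball x₀ R₀ \ ball x₀ R) := measurableSet_ball.diff measurableSet_ball
  have := isFiniteMeasure_restrict_annulus (μ := μ) (x₀ := x₀) (R := R) (R₀ := R₀)
  rw [hφ.annulusWeight_mul_rpow hβ1 hpos, integrable_indicator_iff hA]
  exact (integrable_rpow_of_le_one (hφ.integrable_mul_rpow hU hpos).restrict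
    (fun x => mul_rpow_nonneg_of_pos_tsupport (hφ.nonneg x) hpos) (by linarith)
    (by linarith)).const_mul Λ

lemma IsCutoff_s10.integral_annulusWeight_mul_rpow_le (hφ : IsCutoff_s10 φ x₀ R R₀ β Λ) (hΛ : 0 ≤ Λ)
    (hβ0 : 0 ≤ β) (hβ1 : β < 1) (hU : ∀ x ∈ tsupport φ, ContinuousAt U x)
    (hpos : ∀ x ∈ tsupport φ, 0 < U x) :
    ∫ x, annulusWeight φ x₀ R R₀ β Λ x * U x ^ (p * (1 - β)) ∂μ ≤
      Λ * (μ.real (ball x₀ R₀ \ ball x₀ R) ^ β * (∫ x, φ x * U x ^ p ∂μ) ^ (1 - β)) := by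
  have hA : MeasurableSet (ball x₀ R₀ \ ball x₀ R) := measurableSet_ball.diff measurableSet_ball
  have := isFiniteMeasure_restrict_annulus (μ := μ) (x₀ := x₀) (R := R) (R₀ := R₀)
  have hw0 : ∀ x, 0 ≤ φ x * U x ^ p := fun x =>
    mul_rpow_nonneg_of_pos_tsupport (hφ.nonneg x) hpos
  have hw : Integrable (fun x => φ x * U x ^ p) μ := hφ.integrable_mul_rpow hU hpos
  have hholder := integral_rpow_le_of_le_one (r := 1 - β)
    (hw.restrict (s := ball x₀ R₀ \ ball x₀ R)) hw0 (by linarith) (by linarith)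
  rw [sub_sub_cancel, measureReal_restrict_apply_univ] at hholder
  rw [hφ.annulusWeight_mul_rpow hβ1 hpos, integral_indicator hA, integral_const_mul]
  gcongr
  refine hholder.trans ?_
  gcongr ?_ * ?_ ^ (1 - β)
  · exact integral_nonneg hw0
  · exact setIntegral_le_integral hw (ae_of_all _ hw0)

end AnnulusWeight

section SpatialEstimate

variable {d : ℕ} {m p R R₀ Λ : ℝ} {x₀ : EuclideanSpace ℝ (Fin d)}
  {φ U : EuclideanSpace ℝ (Fin d) → ℝ}

lemma IsCutoff_s10.integral_mul_rpow_mul_spaceLap_rpow_le (hφ : IsCutoff_s10 φ x₀ R R₀ ((1 - m) / p) Λ)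
    (hΛ : 0 ≤ Λ) (hm0 : m ≠ 0) (hm1 : m ≤ 1) (hp : 1 ≤ p) (hpm : 1 - m < p)
    (hU : ∀ x ∈ tsupport φ, ContDiffAt ℝ 2 U x) (hpos : ∀ x ∈ tsupport φ, 0 < U x) :
    ∫ x, φ x * U x ^ (p - 1) * (spaceLap (fun y => U y ^ m) x / m) ≤
      d * ((1 + |m|⁻¹) / p) * (Λ * (volume.real (ball x₀ R₀ \ ball x₀ R) ^ ((1 - m) / p) *
        (∫ x, φ x * U x ^ p) ^ (1 - (1 - m) / p))) := by
  have hβ0 : 0 ≤ (1 - m) / p := div_nonneg (by linarith) (by linarith)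
  have hβ1 : (1 - m) / p < 1 := (div_lt_one (by linarith)).2 hpm
  have hU0 : ∀ x ∈ tsupport φ, ContinuousAt U x := fun x hx => (hU x hx).continuousAt
  have hexp : p + m - 1 = p * (1 - (1 - m) / p) := by field
  refine (_root_.integral_mul_rpow_mul_spaceLap_rpow_le hm0 hp hpm hφ.contDiff
    hφ.hasCompactSupport hφ.nonneg hU hpos (fun x => hφ.annulusWeight_nonneg hΛ)
    (fun x => annulusWeight_eq_zero_of_notMem_tsupport hβ1)
    (fun e x => hφ.sq_dirDeriv_le_mul_annulusWeight hΛ hβ1)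
    (fun e x => hφ.dirDeriv_dirDeriv_le_annulusWeight hΛ) ?_).trans ?_
  · rw [hexp]
    exact hφ.integrable_annulusWeight_mul_rpow hβ0 hβ1 hU0 hpos
  · rw [hexp]
    gcongr
    exact hφ.integral_annulusWeight_mul_rpow_le hΛ hβ0 hβ1 hU0 hpos

end SpatialEstimate

/-! ### Evolution in time -/

section TimeDerivative

lemma hasDerivAt_dirDeriv_one_zero {E : Type*} [NormedAddCommGroup E] [NormedSpace ℝ E]
    {f : ℝ × E → ℝ} {t : ℝ} {x : E} (hf : DifferentiableAt ℝ f (t, x)) :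
    HasDerivAt (fun τ => f (τ, x)) (dirDeriv (1, 0) f (t, x)) t :=
  hf.hasFDerivAt.comp_hasDerivAt t ((hasDerivAt_id t).prodMk (hasDerivAt_const t x))

lemma hasDerivAt_integral_mul_of_hasCompactSupport {X : Type*} [TopologicalSpace X]
    [MeasurableSpace X] [OpensMeasurableSpace X] {μ : Measure X} [IsFiniteMeasureOnCompacts μ]
    {φ : X → ℝ} {f f' : ℝ × X → ℝ} {I : Set ℝ} {t : ℝ} (hφ : Continuous φ)
    (hc : HasCompactSupport φ) (hI : I ∈ nhds t)
    (hf : ∀ τ ∈ I, ∀ x ∈ tsupport φ, ContinuousAt f (τ, x))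
    (hf' : ∀ τ ∈ I, ∀ x ∈ tsupport φ, ContinuousAt f' (τ, x))
    (hderiv : ∀ τ ∈ I, ∀ x ∈ tsupport φ, HasDerivAt (fun σ => f (σ, x)) (f' (τ, x)) τ) :
    HasDerivAt (fun τ => ∫ x, φ x * f (τ, x) ∂μ) (∫ x, φ x * f' (t, x) ∂μ) t := by
  have ht : t ∈ I := mem_of_mem_nhds hI
  have hint : ∀ g : ℝ × X → ℝ, (∀ τ ∈ I, ∀ x ∈ tsupport φ, ContinuousAt g (τ, x)) →
      ∀ τ ∈ I, Integrable (fun x => φ x * g (τ, x)) μ := fun g hg τ hτ =>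
    integrable_mul_of_continuousAt_tsupport hφ hc fun x hx =>
      (hg τ hτ x hx).comp (f := fun y => (τ, y)) (by fun_prop)
  obtain ⟨ε, hε, hεI⟩ := nhds_basis_closedBall.mem_iff.1 hI
  have hcont : ContinuousOn (fun q : ℝ × X => φ q.2 * f' q) (closedBall t ε ×ˢ tsupport φ) :=
    fun q hq => ((hφ.comp continuous_snd).continuousAt.mul
      (hf' q.1 (hεI hq.1) q.2 hq.2)).continuousWithinAt
  obtain ⟨B, hB⟩ :=
    ((isCompact_closedBall t ε).prod hc.isCompact).exists_bound_of_continuousOn hcont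
  have hbound : Integrable ((tsupport φ).indicator fun _ => B) μ :=
    (integrable_indicator_iff (isClosed_tsupport φ).measurableSet).2
      (integrableOn_const hc.measure_lt_top.ne)
  refine (hasDerivAt_integral_of_dominated_loc_of_deriv_le (closedBall_mem_nhds t hε)
    (Filter.eventually_of_mem hI fun τ hτ => (hint f hf τ hτ).aestronglyMeasurable)
    (hint f hf t ht) (hint f' hf' t ht).aestronglyMeasurable
    (F' := fun τ x => φ x * f' (τ, x)) (ae_of_all _ fun x τ hτ => ?_) hbound
    (ae_of_all _ fun x τ hτ => ?_)).2
  · by_cases hx : x ∈ tsupport φ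
    · rw [indicator_of_mem hx]
      exact hB (τ, x) ⟨hτ, hx⟩
    · simp [image_eq_zero_of_notMem_tsupport hx, hx]
  · by_cases hx : x ∈ tsupport φ
    · exact (hderiv τ (hεI hτ) x hx).const_mul (φ x)
    · simpa [image_eq_zero_of_notMem_tsupport hx] using hasDerivAt_const τ (0 : ℝ)

lemma hasDerivAt_integral_mul_rpow {E : Type*} [NormedAddCommGroup E] [NormedSpace ℝ E]
    [MeasurableSpace E] [OpensMeasurableSpace E] {μ : Measure E} [IsFiniteMeasureOnCompacts μ]
    {φ : E → ℝ} {u : ℝ → E → ℝ} {I : Set ℝ} {t : ℝ} (hφ : Continuous φ)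
    (hc : HasCompactSupport φ) (hI : I ∈ nhds t)
    (hu : ∀ τ ∈ I, ∀ x ∈ tsupport φ, ContDiffAt ℝ 1 (fun q : ℝ × E => u q.1 q.2) (τ, x))
    (hpos : ∀ τ ∈ I, ∀ x ∈ tsupport φ, 0 < u τ x) (p : ℝ) :
    HasDerivAt (fun τ => ∫ x, φ x * u τ x ^ p ∂μ)
      (p * ∫ x, φ x * u t x ^ (p - 1) * deriv (fun τ => u τ x) t ∂μ) t := by
  have hup : ∀ τ ∈ I, ∀ x ∈ tsupport φ,
      ContDiffAt ℝ 1 (fun q : ℝ × E => u q.1 q.2 ^ p) (τ, x) := fun τ hτ x hx =>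
    (hu τ hτ x hx).rpow_const_of_ne (hpos τ hτ x hx).ne'
  convert hasDerivAt_integral_mul_of_hasCompactSupport (μ := μ) hφ hc hI
    (fun τ hτ x hx => (hup τ hτ x hx).continuousAt)
    (fun τ hτ x hx => continuousAt_dirDeriv (hup τ hτ x hx))
    (fun τ hτ x hx => hasDerivAt_dirDeriv_one_zero ((hup τ hτ x hx).differentiableAt one_ne_zero))
    using 1
  rw [← integral_const_mul]
  refine integral_congr_ae (ae_of_all _ fun x => ?_)
  by_cases hx : x ∈ tsupport φ
  · have ht : t ∈ I := mem_of_mem_nhds hI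
    have hdiff := (hu t ht x hx).differentiableAt one_ne_zero
    simp only [dirDeriv_rpow_const hdiff (hpos t ht x hx),
      (hasDerivAt_dirDeriv_one_zero hdiff).deriv]
    ring
  · simp [image_eq_zero_of_notMem_tsupport hx]

end TimeDerivative

lemma rpow_le_rpow_add_of_deriv_le_mul_rpow {Y Y' : ℝ → ℝ} {β K s t : ℝ} (hβ : 0 ≤ β)
    (hst : s ≤ t) (hY : ∀ τ ∈ Icc s t, HasDerivAt Y (Y' τ) τ) (hpos : ∀ τ ∈ Icc s t, 0 < Y τ)
    (hY' : ∀ τ ∈ Icc s t, Y' τ ≤ K * Y τ ^ (1 - β)) :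
    Y t ^ β ≤ Y s ^ β + β * K * (t - s) := by
  have hderiv : ∀ τ ∈ Icc s t, HasDerivAt (fun τ => Y τ ^ β) (Y' τ * β * Y τ ^ (β - 1)) τ :=
    fun τ hτ => (hY τ hτ).rpow_const (Or.inl (hpos τ hτ).ne')
  have hle : ∀ τ ∈ Icc s t, Y' τ * β * Y τ ^ (β - 1) ≤ β * K := fun τ hτ => by
    have hYτ := hpos τ hτ
    calc Y' τ * β * Y τ ^ (β - 1) ≤ K * Y τ ^ (1 - β) * β * Y τ ^ (β - 1) := by
          gcongr
          exact hY' τ hτ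
      _ = β * K * (Y τ ^ (1 - β) * Y τ ^ (β - 1)) := by ring
      _ = β * K := by rw [← rpow_add hYτ, sub_add_sub_cancel', sub_self, rpow_zero, mul_one]
  have hmvt := (convex_Icc s t).image_sub_le_mul_sub_of_deriv_le
    (fun τ hτ => (hderiv τ hτ).continuousAt.continuousWithinAt)
    (fun τ hτ => (hderiv τ (interior_subset hτ)).differentiableAt.differentiableWithinAt)
    (fun τ hτ => (hderiv τ (interior_subset hτ)).deriv.trans_le (hle τ (interior_subset hτ)))
    s (left_mem_Icc.2 hst) t (right_mem_Icc.2 hst) hst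
  linarith

section CutoffComparison

variable {E : Type*} [NormedAddCommGroup E] [NormedSpace ℝ E] [MeasurableSpace E]
  [OpensMeasurableSpace E] {μ : Measure E} [IsFiniteMeasureOnCompacts μ] {φ U : E → ℝ}
  {x₀ : E} {R R₀ β Λ p : ℝ}

lemma IsCutoff_s10.integral_mul_rpow_pos [μ.IsOpenPosMeasure] (hφ : IsCutoff_s10 φ x₀ R R₀ β Λ)
    (hR : 0 < R) (hU : ∀ x ∈ tsupport φ, ContinuousAt U x) (hpos : ∀ x ∈ tsupport φ, 0 < U x) :
    0 < ∫ x, φ x * U x ^ p ∂μ := by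
  have hφx₀ : φ x₀ = 1 := hφ.eq_one x₀ (mem_ball_self hR)
  have hx₀ : x₀ ∈ tsupport φ := subset_tsupport φ (by simp [hφx₀])
  have hcont : Continuous fun x => φ x * U x ^ p :=
    continuous_mul_of_continuousAt_tsupport hφ.contDiff.continuous fun x hx =>
      (hU x hx).rpow_const (Or.inl (hpos x hx).ne')
  refine hcont.integral_pos_of_hasCompactSupport_nonneg_nonzero (x := x₀)
    hφ.hasCompactSupport.mul_right
    (fun x => mul_rpow_nonneg_of_pos_tsupport (hφ.nonneg x) hpos) ?_
  rw [hφx₀, one_mul]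
  exact (rpow_pos_of_pos (hpos x₀ hx₀) p).ne'

lemma IsCutoff_s10.setIntegral_ball_le_integral_mul (hφ : IsCutoff_s10 φ x₀ R R₀ β Λ)
    (hU : ∀ x ∈ tsupport φ, ContinuousAt U x) (hpos : ∀ x ∈ tsupport φ, 0 < U x) :
    ∫ x in ball x₀ R, U x ^ p ∂μ ≤ ∫ x, φ x * U x ^ p ∂μ :=
  calc ∫ x in ball x₀ R, U x ^ p ∂μ = ∫ x in ball x₀ R, φ x * U x ^ p ∂μ :=
        setIntegral_congr_fun measurableSet_ball fun x hx => by simp [hφ.eq_one x hx]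
    _ ≤ ∫ x, φ x * U x ^ p ∂μ := setIntegral_le_integral (hφ.integrable_mul_rpow hU hpos)
        (ae_of_all _ fun x => mul_rpow_nonneg_of_pos_tsupport (hφ.nonneg x) hpos)

lemma IsCutoff_s10.integral_mul_le_setIntegral_ball (hφ : IsCutoff_s10 φ x₀ R R₀ β Λ)
    (hU : ∀ x ∈ ball x₀ R₀, ContinuousAt U x) (hpos : ∀ x ∈ ball x₀ R₀, 0 < U x)
    (hint : IntegrableOn (fun x => U x ^ p) (ball x₀ R₀) μ) :
    ∫ x, φ x * U x ^ p ∂μ ≤ ∫ x in ball x₀ R₀, U x ^ p ∂μ := by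
  have hzero : ∀ x ∉ ball x₀ R₀, φ x * U x ^ p = 0 := fun x hx => by
    rw [image_eq_zero_of_notMem_tsupport fun h => hx (hφ.tsupport_subset h), zero_mul]
  rw [← setIntegral_eq_integral_of_forall_compl_eq_zero hzero]
  have hφint : Integrable (fun x => φ x * U x ^ p) μ :=
    hφ.integrable_mul_rpow (fun x hx => hU x (hφ.tsupport_subset hx))
      fun x hx => hpos x (hφ.tsupport_subset hx)
  exact setIntegral_mono_on hφint.integrableOn hint measurableSet_ball fun x hx =>
    mul_le_of_le_one_left (rpow_nonneg (hpos x hx).le p) (hφ.le_one x)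

end CutoffComparison

section FastDiffusion

variable {d : ℕ} {m p R R₀ Λ s t : ℝ} {x₀ : EuclideanSpace ℝ (Fin d)} {I : Set ℝ}
  {φ : EuclideanSpace ℝ (Fin d) → ℝ} {u : ℝ → EuclideanSpace ℝ (Fin d) → ℝ}
  {Q Q' : Set (ℝ × EuclideanSpace ℝ (Fin d))} {x : EuclideanSpace ℝ (Fin d)}

lemma IsFDESolM.mono (hu : IsFDESolM m Q u) (h : Q' ⊆ Q) : IsFDESolM m Q' u :=
  ⟨fun q hq => hu.1 q (h hq), hu.2.1.mono h, fun q hq => hu.2.2 q (h hq)⟩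

lemma IsFDESolM.contDiffAt (hu : IsFDESolM m Q u) (hQ : IsOpen Q) (h : (t, x) ∈ Q)
    {n : ℕ∞} : ContDiffAt ℝ n (fun q : ℝ × EuclideanSpace ℝ (Fin d) => u q.1 q.2) (t, x) :=
  (hu.2.1.contDiffAt (hQ.mem_nhds h)).of_le (mod_cast le_top)

lemma IsFDESolM.contDiffAt_space (hu : IsFDESolM m Q u) (hQ : IsOpen Q) (h : (t, x) ∈ Q)
    {n : ℕ∞} : ContDiffAt ℝ n (u t) x :=
  (hu.contDiffAt hQ h).comp x (contDiffAt_const.prodMk contDiffAt_id)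

lemma IsFDESolM.hasDerivAt_integral_mul_rpow (hu : IsFDESolM m Q u) (hQ : IsOpen Q)
    (hφ : Continuous φ) (hc : HasCompactSupport φ) (hI : I ∈ nhds t)
    (hsub : I ×ˢ tsupport φ ⊆ Q) :
    HasDerivAt (fun τ => ∫ x, φ x * u τ x ^ p)
      (p * ∫ x, φ x * u t x ^ (p - 1) * (spaceLap (fun y => u t y ^ m) x / m)) t := by
  convert _root_.hasDerivAt_integral_mul_rpow (μ := volume) hφ hc hI
    (fun τ hτ x hx => hu.contDiffAt hQ (hsub ⟨hτ, hx⟩) (n := 1))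
    (fun τ hτ x hx => hu.1 (τ, x) (hsub ⟨hτ, hx⟩)) p using 2
  refine integral_congr_ae (ae_of_all _ fun x => ?_)
  by_cases hx : x ∈ tsupport φ
  · simp only [hu.2.2 (t, x) (hsub ⟨mem_of_mem_nhds hI, hx⟩)]
  · simp [image_eq_zero_of_notMem_tsupport hx]

lemma IsFDESolM.weighted_Lp_norm_evolution (hu : IsFDESolM m (I ×ˢ ball x₀ R₀) u) (hI : IsOpen I)
    (hφ : IsCutoff_s10 φ x₀ R R₀ ((1 - m) / p) Λ) (hΛ : 0 ≤ Λ) (hm0 : m ≠ 0) (hm1 : m ≤ 1)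
    (hp : 1 ≤ p) (hpm : 1 - m < p) (hR : 0 < R) (hst : s ≤ t) (hIcc : Icc s t ⊆ I) :
    (∫ x, φ x * u t x ^ p) ^ ((1 - m) / p) ≤ (∫ x, φ x * u s x ^ p) ^ ((1 - m) / p) +
      (1 - m) / p * (d * (1 + |m|⁻¹) * Λ *
        volume.real (ball x₀ R₀ \ ball x₀ R) ^ ((1 - m) / p)) * (t - s) := by
  have hQ : IsOpen (I ×ˢ ball x₀ R₀) := hI.prod isOpen_ball
  have hsub : I ×ˢ tsupport φ ⊆ I ×ˢ ball x₀ R₀ := prod_mono_right hφ.tsupport_subset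
  have hpos : ∀ τ ∈ I, ∀ x ∈ tsupport φ, 0 < u τ x := fun τ hτ x hx =>
    hu.1 (τ, x) (hsub ⟨hτ, hx⟩)
  have hC2 : ∀ τ ∈ I, ∀ x ∈ tsupport φ, ContDiffAt ℝ 2 (u τ) x := fun τ hτ x hx =>
    hu.contDiffAt_space hQ (hsub ⟨hτ, hx⟩) (n := 2)
  refine rpow_le_rpow_add_of_deriv_le_mul_rpow (Y := fun τ => ∫ x, φ x * u τ x ^ p)
    (div_nonneg (by linarith) (by linarith)) hst
    (fun τ hτ => hu.hasDerivAt_integral_mul_rpow hQ hφ.contDiff.continuous hφ.hasCompactSupport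
      (hI.mem_nhds (hIcc hτ)) hsub)
    (fun τ hτ => hφ.integral_mul_rpow_pos hR (fun x hx => (hC2 τ (hIcc hτ) x hx).continuousAt)
      (hpos τ (hIcc hτ))) fun τ hτ => ?_
  have hspace := hφ.integral_mul_rpow_mul_spaceLap_rpow_le hΛ hm0 hm1 hp hpm
    (hC2 τ (hIcc hτ)) (hpos τ (hIcc hτ))
  refine (mul_le_mul_of_nonneg_left hspace (by linarith)).trans_eq ?_
  have hp0 : p ≠ 0 := by linarith
  field

end FastDiffusion

theorem local_Lp_norm_evolution_general (d : ℕ) (hd : 1 ≤ d) (m : ℝ) (hm1 : m < 1) (hm0 : m ≠ 0) :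
    ∃ c : ℝ, 0 < c ∧
      ∀ (p : ℝ), 1 ≤ p → 1 - m < p →
      ∀ (I : Set ℝ), IsOpen I →
      ∀ (u : ℝ → EuclideanSpace ℝ (Fin d) → ℝ) (x₀ : EuclideanSpace ℝ (Fin d)) (R R₀ : ℝ),
        0 < R → R < R₀ → IsFDESolM m (I ×ˢ ball x₀ R₀) u →
      ∀ s t : ℝ, s ≤ t → Icc s t ⊆ I → IntegrableOn (fun x => u s x ^ p) (ball x₀ R₀) →
        (∫ x in ball x₀ R, u t x ^ p) ^ ((1 - m) / p) ≤
          (∫ x in ball x₀ R₀, u s x ^ p) ^ ((1 - m) / p) +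
          p * c * (volume (ball x₀ R₀ \ ball x₀ R)).toReal ^ ((1 - m) / p) /
            (R₀ - R) ^ 2 * (t - s) := by
  obtain ⟨M, hM, hcutoff⟩ := exists_isCutoff_s10
  have h1m : 0 < 1 - m := sub_pos.2 hm1
  refine ⟨d * (1 + |m|⁻¹) * M / (1 - m), by positivity, ?_⟩
  intro p hp hpm I hI u x₀ R R₀ hR hRR₀ hu s t hst hIcc hint
  have hp0 : 0 < p := by linarith
  have hβ0 : 0 < (1 - m) / p := by positivity
  have hQ : IsOpen (I ×ˢ ball x₀ R₀) := hI.prod isOpen_ball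
  have hpos : ∀ τ ∈ I, ∀ x ∈ ball x₀ R₀, 0 < u τ x := fun τ hτ x hx => hu.1 (τ, x) ⟨hτ, hx⟩
  have hcont : ∀ τ ∈ I, ∀ x ∈ ball x₀ R₀, ContinuousAt (u τ) x := fun τ hτ x hx =>
    (hu.contDiffAt_space hQ ⟨hτ, hx⟩ (n := 0)).continuousAt
  obtain ⟨φ, hφ⟩ := hcutoff x₀ hR hRR₀ hβ0 ((div_lt_one hp0).2 hpm)
  have hsI : s ∈ I := hIcc (left_mem_Icc.2 hst)
  have htI : t ∈ I := hIcc (right_mem_Icc.2 hst)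
  calc (∫ x in ball x₀ R, u t x ^ p) ^ ((1 - m) / p)
      ≤ (∫ x, φ x * u t x ^ p) ^ ((1 - m) / p) := by
        gcongr
        · exact setIntegral_nonneg measurableSet_ball fun x hx =>
            rpow_nonneg (hpos t htI x (ball_subset_ball hRR₀.le hx)).le p
        · exact hφ.setIntegral_ball_le_integral_mul
            (fun x hx => hcont t htI x (hφ.tsupport_subset hx))
            fun x hx => hpos t htI x (hφ.tsupport_subset hx)
    _ ≤ _ := hu.weighted_Lp_norm_evolution hI hφ (by positivity) hm0 hm1.le hp hpm hR hst hIcc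
    _ ≤ (∫ x in ball x₀ R₀, u s x ^ p) ^ ((1 - m) / p) + _ := by
        gcongr
        · exact integral_nonneg fun x => mul_rpow_nonneg_of_pos_tsupport (hφ.nonneg x)
            fun x hx => hpos s hsI x (hφ.tsupport_subset hx)
        · exact hφ.integral_mul_le_setIntegral_ball (hcont s hsI) (hpos s hsI) hint
    _ = _ := by
        rw [measureReal_def]
        field

/-- **Theorem 3.2: evolution of local `L^p` norms.** -/
theorem local_Lp_norm_evolution
    (d : ℕ) (hd : 1 ≤ d) (m : ℝ) (hm1 : m < 1) (hm0 : m ≠ 0) :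
    ∃ c : ℝ, 0 < c ∧
      ∀ (p : ℝ), 1 ≤ p → 1 - m < p →
      ∀ (Ω : Set (EuclideanSpace ℝ (Fin d))), IsOpen Ω →
      ∀ (u : ℝ → EuclideanSpace ℝ (Fin d) → ℝ) (T : ℝ), 0 < T →
        IsFDESolM m (Ioo 0 T ×ˢ Ω) u →
      ∀ (x₀ : EuclideanSpace ℝ (Fin d)) (R R₀ : ℝ), 0 < R → R < R₀ →
        ball x₀ R₀ ⊆ Ω →
        (∀ t ∈ Ioo (0 : ℝ) T, IntegrableOn (fun x => u t x ^ p) (ball x₀ R₀)) →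
      ∀ s t : ℝ, 0 < s → s ≤ t → t < T →
        (∫ x in ball x₀ R, u t x ^ p) ^ ((1 - m) / p) ≤
          (∫ x in ball x₀ R₀, u s x ^ p) ^ ((1 - m) / p) +
          p * c * (volume (ball x₀ R₀ \ ball x₀ R)).toReal ^ ((1 - m) / p) /
            (R₀ - R) ^ 2 * (t - s) := by
  obtain ⟨c, hc, hbound⟩ := local_Lp_norm_evolution_general d hd m hm1 hm0
  exact ⟨c, hc, fun p hp hpm Ω _ u T _ hu x₀ R R₀ hR hRR₀ hball hint s t hs hst ht =>
    hbound p hp hpm (Ioo 0 T) isOpen_Ioo u x₀ R R₀ hR hRR₀ (hu.mono (prod_mono_right hball))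
      s t hst (Icc_subset_Ioo hs ht) (hint s ⟨hs, hst.trans_lt ht⟩)⟩
end
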